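/- There is a constant q₀ depending only on n such that the following holds whenever q ≥ q₀: for every nonempty J ⊆ [n] with 1 ∉ J and n ∉ J, every EKR-set of flags of type J has cardinality strictly less than N_J/(q^n + 1), where N_J is the total number of flags of type J. -/

import Mathlib

open scoped Classical

open Module

section Defs

variable {F V : Type} [Field F] [AddCommGroup V] [Module F V]

/-- The orthogonal complement of a subspace with respect to a bilinear form. -/
def bperp (B : V →ₗ[F] V →ₗ[F] F) (W : Submodule F V) : Submodule F V :=
  ⨅ w ∈ W, LinearMap.ker (B w)

/-- A subspace is totally isotropic for `B`. -/
def IsTotIso (B : V →ₗ[F] V →ₗ[F] F) (W : Submodule F V) : Prop :=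
  ∀ u ∈ W, ∀ w ∈ W, B u w = 0

/-- `B` is an alternating form. -/
def IsAltForm (B : V →ₗ[F] V →ₗ[F] F) : Prop := ∀ v, B v v = 0

/-- `B` is nondegenerate. -/
def NondegForm (B : V →ₗ[F] V →ₗ[F] F) : Prop := ∀ v, (∀ w, B v w = 0) → v = 0

/-- A flag of type `J` of totally isotropic subspaces: entries outside `J` are `⊥`. -/
structure SFlag (B : V →ₗ[F] V →ₗ[F] F) (J : Finset ℕ) where
  space : ℕ → Submodule F V
  isotropic : ∀ i ∈ J, IsTotIso B (space i)
  finrank_eq : ∀ i ∈ J, Module.finrank F (space i) = i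
  mono : ∀ i ∈ J, ∀ j ∈ J, i ≤ j → space i ≤ space j
  eq_bot : ∀ i, i ∉ J → space i = ⊥

/-- Two flags of type `J` are opposite. -/
def FlagOpp {B : V →ₗ[F] V →ₗ[F] F} {J : Finset ℕ} (C C' : SFlag B J) : Prop :=
  ∀ i ∈ J, bperp B (C.space i) ⊓ C'.space i = ⊥

/-- An EKR-set of flags of type `J`: no two members are opposite. -/
def IsEKRFlags {B : V →ₗ[F] V →ₗ[F] F} {J : Finset ℕ} (𝓕 : Set (SFlag B J)) : Prop :=
  ∀ C ∈ 𝓕, ∀ C' ∈ 𝓕, ¬ FlagOpp C C'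

/-- Two subspaces are opposite. -/
def SpaceOpp (B : V →ₗ[F] V →ₗ[F] F) (S T : Submodule F V) : Prop :=
  bperp B S ⊓ T = ⊥

/-- An EKR-set of totally isotropic `s`-spaces: no two members are opposite. -/
def IsEKRSpaces (B : V →ₗ[F] V →ₗ[F] F) (s : ℕ) (𝓕 : Set (Submodule F V)) : Prop :=
  (∀ S ∈ 𝓕, IsTotIso B S ∧ Module.finrank F S = s) ∧
    ∀ S ∈ 𝓕, ∀ T ∈ 𝓕, ¬ SpaceOpp B S T

/-- An `s`-space `S` is heavy with respect to a set `𝓕` of flags: every flag whose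
`s`-th entry equals `S` belongs to `𝓕`. -/
def Heavy {B : V →ₗ[F] V →ₗ[F] F} {J : Finset ℕ} (𝓕 : Set (SFlag B J)) (s : ℕ)
    (S : Submodule F V) : Prop :=
  ∀ C : SFlag B J, C.space s = S → C ∈ 𝓕

end Defs

/-- `z_k = ∏_{i=1}^k (q^i-1)/(q-1)`. -/
noncomputable def zpol (q k : ℕ) : ℝ :=
  ∏ i ∈ Finset.Icc 1 k, ((q : ℝ) ^ i - 1) / ((q : ℝ) - 1)

/-- The Gaussian binomial coefficient `[m choose k]_q` as a real number. -/
noncomputable def gaussq (q m k : ℕ) : ℝ :=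
  ∏ i ∈ Finset.Icc 1 k, ((q : ℝ) ^ (m - k + i) - 1) / ((q : ℝ) ^ i - 1)

/-- `Φ_m^s` in `PS(n,1,q)`: the number of totally isotropic `s`-spaces containing a
fixed totally isotropic `m`-space. -/
noncomputable def PhiP (q n m s : ℕ) : ℝ :=
  gaussq q (n - m) (s - m) * ∏ i ∈ Finset.Icc 1 (s - m), ((q : ℝ) ^ (n - m + 1 - i) + 1)

/-!
Suppose an EKR-set `𝓕` had about `N_J / (q ^ n + 1)` flags. The kernel `𝟙[v ⊥ w] - 1 / q` has small
spectral norm, and since every pair of flags of `𝓕` fails to be opposite at some level, this forces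
a level `j ∈ J` at which the degrees (the numbers of flags of `𝓕` whose `j`-space contains a given
vector) have a large second moment. Counting pairs of flags through two independent vectors shows
that the product of their degrees is small, so the heavy vectors lie on one line and the light ones
carry the second moment. On the other hand, as the levels `1` and `n` are excluded, the residue of a
vector has room for a variance computation, and the resulting third moment estimate shows that
few flags have a `j`-space collecting much light weight. This contradicts the second moment.
-/

open Finset

local notation "𝟙[" p "]" => (if p then (1 : ℝ) else 0)

lemma iverson_nonneg (p : Prop) [Decidable p] : 0 ≤ 𝟙[p] := by
  split_ifs <;> norm_num

lemma iverson_le_one (p : Prop) [Decidable p] : 𝟙[p] ≤ 1 := by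
  split_ifs <;> norm_num

lemma sum_sum_mul_mul_le_of_sum_abs_le {ι : Type*} {S : Finset ι} {a : ι → ℝ} {k : ι → ι → ℝ}
    {D : ℝ} (hk : ∀ u ∈ S, ∀ v ∈ S, k u v = k v u) (hD : ∀ u ∈ S, ∑ v ∈ S, |k u v| ≤ D) :
    ∑ u ∈ S, ∑ v ∈ S, a u * a v * k u v ≤ D * ∑ u ∈ S, a u ^ 2 := by
  have amgm (u v : ι) : a u * a v * k u v ≤ a u ^ 2 * |k u v| / 2 + a v ^ 2 * |k u v| / 2 := by
    rcases abs_cases (k u v) with ⟨h, -⟩ | ⟨h, -⟩ <;> rw [h]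
    · nlinarith [mul_nonneg (h ▸ abs_nonneg (k u v)) (sq_nonneg (a u - a v))]
    · nlinarith [mul_nonneg (h ▸ abs_nonneg (k u v)) (sq_nonneg (a u + a v))]
  have swap : ∑ u ∈ S, ∑ v ∈ S, a v ^ 2 * |k u v| / 2
      = ∑ u ∈ S, ∑ v ∈ S, a u ^ 2 * |k u v| / 2 := by
    rw [sum_comm]
    exact sum_congr rfl fun u hu => sum_congr rfl fun v hv => by rw [hk v hv u hu]
  calc ∑ u ∈ S, ∑ v ∈ S, a u * a v * k u v
      ≤ ∑ u ∈ S, ∑ v ∈ S, (a u ^ 2 * |k u v| / 2 + a v ^ 2 * |k u v| / 2) :=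
        sum_le_sum fun u _ => sum_le_sum fun v _ => amgm u v
    _ = ∑ u ∈ S, a u ^ 2 * ∑ v ∈ S, |k u v| := by
        simp only [sum_add_distrib, swap, mul_sum]
        simp only [← sum_add_distrib, add_halves]
    _ ≤ ∑ u ∈ S, a u ^ 2 * D :=
        sum_le_sum fun u hu => mul_le_mul_of_nonneg_left (hD u hu) (sq_nonneg _)
    _ = D * ∑ u ∈ S, a u ^ 2 := by rw [← sum_mul, mul_comm]

/-! ### Symplectic geometry -/

/-- A symplectic form: alternating and nondegenerate. -/
structure IsSymplectic {F V : Type} [Field F] [AddCommGroup V] [Module F V]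
    (B : V →ₗ[F] V →ₗ[F] F) : Prop where
  alt : IsAltForm B
  nondeg : NondegForm B

section Symplectic

variable {F V : Type} [Field F] [AddCommGroup V] [Module F V] {B : V →ₗ[F] V →ₗ[F] F}
  {T : Submodule F V} {u v w : V}

lemma mem_bperp : v ∈ bperp B T ↔ ∀ w ∈ T, B w v = 0 := by
  simp only [bperp, Submodule.mem_iInf, LinearMap.mem_ker]

lemma mem_bperp_span {s : Set V} : v ∈ bperp B (Submodule.span F s) ↔ ∀ w ∈ s, B w v = 0 := by
  refine ⟨fun h w hw => mem_bperp.1 h w (Submodule.subset_span hw), fun h => mem_bperp.2 ?_⟩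
  exact Submodule.span_le.2 (show s ⊆ LinearMap.ker (B.flip v) from h)

lemma mem_bperp_span_singleton : v ∈ bperp B (Submodule.span F {u}) ↔ B u v = 0 := by
  simp only [mem_bperp_span, Set.mem_singleton_iff, forall_eq]

lemma IsTotIso.le_bperp (hT : IsTotIso B T) : T ≤ bperp B T :=
  fun v hv => mem_bperp.2 fun w hw => hT w hw v hv

lemma isTotIso_iff_le_bperp : IsTotIso B T ↔ T ≤ bperp B T :=
  ⟨IsTotIso.le_bperp, fun h u hu _ hw => mem_bperp.1 (h hw) u hu⟩

lemma IsAltForm.apply_eq_zero_comm (hB : IsAltForm B) : B u v = 0 ↔ B v u = 0 :=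
  LinearMap.BilinForm.IsAlt.eq_iff hB

lemma bperp_eq_orthogonal (B : V →ₗ[F] V →ₗ[F] F) (T : Submodule F V) :
    bperp B T = LinearMap.BilinForm.orthogonal B T := by
  ext v
  rw [mem_bperp, LinearMap.BilinForm.mem_orthogonal_iff]

lemma IsTotIso.sup_span_singleton (hB : IsAltForm B) (hT : IsTotIso B T) (hv : v ∈ bperp B T) :
    IsTotIso B (T ⊔ Submodule.span F {v}) := by
  intro x hx y hy
  obtain ⟨t, ht, _, hav, rfl⟩ := Submodule.mem_sup.1 hx
  obtain ⟨s, hs, _, hbv, rfl⟩ := Submodule.mem_sup.1 hy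
  obtain ⟨a, rfl⟩ := Submodule.mem_span_singleton.1 hav
  obtain ⟨b, rfl⟩ := Submodule.mem_span_singleton.1 hbv
  rw [mem_bperp] at hv
  simp [hT t ht s hs, hv t ht, hB.apply_eq_zero_comm.1 (hv s hs), hB v]

lemma IsAltForm.isTotIso_span_singleton (hB : IsAltForm B) (u : V) :
    IsTotIso B (Submodule.span F {u}) := by
  refine isTotIso_iff_le_bperp.2 ((Submodule.span_singleton_le_iff_mem _ _).2 ?_)
  exact mem_bperp_span_singleton.2 (hB u)

lemma finrank_sup_span_singleton [FiniteDimensional F V] (hv : v ∉ T) :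
    finrank F (T ⊔ Submodule.span F {v} : Submodule F V) = finrank F T + 1 := by
  have hdisj : T ⊓ Submodule.span F {v} = ⊥ :=
    (Submodule.disjoint_span_singleton_of_notMem hv).eq_bot
  have hv0 : v ≠ 0 := fun h => hv (h ▸ T.zero_mem)
  have := Submodule.finrank_sup_add_finrank_inf_eq T (Submodule.span F {v})
  rwa [hdisj, finrank_bot, finrank_span_singleton hv0] at this

/-- The transvection with axis `(w - v)^⊥` carrying `v` to `w`. -/
lemma IsAltForm.exists_isometry_of_apply_ne_zero (hB : IsAltForm B) (hv : v ∈ bperp B T)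
    (hw : w ∈ bperp B T) (hvw : B v w ≠ 0) :
    ∃ g : V ≃ₗ[F] V, (∀ x y, B (g x) (g y) = B x y) ∧ (∀ t ∈ T, g t = t) ∧ g v = w := by
  rw [mem_bperp] at hv hw
  let φ : Module.Dual F V := (B v w)⁻¹ • B.flip (w - v)
  have hφ (x : V) : φ x = (B v w)⁻¹ * B x (w - v) := by simp [φ]
  have hφ0 : φ (w - v) = 0 := by rw [hφ, hB, mul_zero]
  refine ⟨LinearEquiv.transvection hφ0, fun x y => ?_, fun t ht => ?_, ?_⟩
  · have hy : B (w - v) y = -B y (w - v) := (LinearMap.BilinForm.IsAlt.neg_eq hB _ _).symm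
    simp only [LinearEquiv.transvection.apply, hφ, map_add, map_smul, LinearMap.add_apply,
      LinearMap.smul_apply, smul_eq_mul, hB (w - v), hy]
    ring
  · rw [LinearEquiv.transvection.apply, hφ, map_sub, hv t ht, hw t ht, sub_zero, mul_zero,
      zero_smul, add_zero]
  · rw [LinearEquiv.transvection.apply, hφ, map_sub, hB v, sub_zero, inv_mul_cancel₀ hvw, one_smul,
      add_sub_cancel]

namespace IsSymplectic

lemma isNondegenerate (hB : IsSymplectic B) : LinearMap.BilinForm.Nondegenerate B :=
  ⟨hB.nondeg, fun v h => hB.nondeg v fun w => hB.alt.apply_eq_zero_comm.1 (h w)⟩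

variable [FiniteDimensional F V]

lemma finrank_bperp_add_finrank (hB : IsSymplectic B) (T : Submodule F V) :
    finrank F (bperp B T) + finrank F T = finrank F V := by
  rw [bperp_eq_orthogonal, LinearMap.BilinForm.finrank_orthogonal hB.isNondegenerate]
  exact Nat.sub_add_cancel T.finrank_le

lemma bperp_bperp (hB : IsSymplectic B) (T : Submodule F V) : bperp B (bperp B T) = T := by
  simpa only [bperp_eq_orthogonal] using LinearMap.BilinForm.orthogonal_orthogonal
    hB.isNondegenerate (LinearMap.BilinForm.IsAlt.isRefl hB.alt) T

lemma exists_mem_bperp_apply_ne_zero (hB : IsSymplectic B) (hv : v ∉ T) :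
    ∃ z ∈ bperp B T, B v z ≠ 0 := by
  by_contra! h
  refine hv (hB.bperp_bperp T ▸ mem_bperp.2 fun z hz => ?_)
  exact hB.alt.apply_eq_zero_comm.1 (h z hz)

lemma exists_mem_bperp_apply_ne_zero_and (hB : IsSymplectic B) (hv : v ∉ T) (hw : w ∉ T) :
    ∃ z ∈ bperp B T, B v z ≠ 0 ∧ B w z ≠ 0 := by
  obtain ⟨x, hx, hvx⟩ := hB.exists_mem_bperp_apply_ne_zero hv
  obtain ⟨y, hy, hwy⟩ := hB.exists_mem_bperp_apply_ne_zero hw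
  by_cases hwx : B w x = 0
  · by_cases hvy : B v y = 0
    · exact ⟨x + y, Submodule.add_mem _ hx hy, by simpa [hvy], by simpa [hwx]⟩
    · exact ⟨y, hy, hvy, hwy⟩
  · exact ⟨x, hx, hvx, hwx⟩

lemma exists_isometry (hB : IsSymplectic B) (hv : v ∈ bperp B T) (hvT : v ∉ T)
    (hw : w ∈ bperp B T) (hwT : w ∉ T) :
    ∃ g : V ≃ₗ[F] V, (∀ x y, B (g x) (g y) = B x y) ∧ (∀ t ∈ T, g t = t) ∧ g v = w := by
  obtain ⟨z, hz, hvz, hwz⟩ := hB.exists_mem_bperp_apply_ne_zero_and hvT hwT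
  rw [ne_eq, hB.alt.apply_eq_zero_comm] at hwz
  obtain ⟨g, hg, hgT, hgv⟩ := hB.alt.exists_isometry_of_apply_ne_zero hv hz hvz
  obtain ⟨g', hg', hgT', hgz⟩ := hB.alt.exists_isometry_of_apply_ne_zero hz hw hwz
  refine ⟨g.trans g', fun x y => ?_, fun t ht => ?_, ?_⟩
  · simp only [LinearEquiv.trans_apply, hg, hg']
  · simp only [LinearEquiv.trans_apply, hgT t ht, hgT' t ht]
  · simp only [LinearEquiv.trans_apply, hgv, hgz]

lemma two_mul_finrank_le (hB : IsSymplectic B) (hT : IsTotIso B T) :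
    2 * finrank F T ≤ finrank F V := by
  have := Submodule.finrank_mono hT.le_bperp
  have := hB.finrank_bperp_add_finrank T
  lia

lemma exists_isTotIso_gt (hB : IsSymplectic B) (hT : IsTotIso B T)
    (hlt : 2 * finrank F T < finrank F V) :
    ∃ T', T ≤ T' ∧ IsTotIso B T' ∧ finrank F T' = finrank F T + 1 := by
  obtain ⟨v, hv, hvT⟩ : ∃ v ∈ bperp B T, v ∉ T := by
    by_contra! h
    have := Submodule.finrank_mono (show bperp B T ≤ T from h)
    have := hB.finrank_bperp_add_finrank T
    lia
  exact ⟨_, le_sup_left, hT.sup_span_singleton hB.alt hv, finrank_sup_span_singleton hvT⟩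

lemma exists_monotone_isTotIso (hB : IsSymplectic B) :
    ∃ W : ℕ → Submodule F V, Monotone W ∧
      ∀ i, 2 * i ≤ finrank F V → IsTotIso B (W i) ∧ finrank F (W i) = i := by
  have (T : Submodule F V) : ∃ T', T ≤ T' ∧ (IsTotIso B T → 2 * finrank F T < finrank F V →
      IsTotIso B T' ∧ finrank F T' = finrank F T + 1) := by
    by_cases h : IsTotIso B T ∧ 2 * finrank F T < finrank F V
    · obtain ⟨T', hle, hT'⟩ := hB.exists_isTotIso_gt h.1 h.2
      exact ⟨T', hle, fun _ _ => hT'⟩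
    · exact ⟨T, le_rfl, fun hT hlt => absurd ⟨hT, hlt⟩ h⟩
  choose next le_next hnext using this
  refine ⟨fun i => next^[i] ⊥, monotone_nat_of_le_succ fun i => ?_, fun i => ?_⟩
  · rw [Function.iterate_succ_apply']
    exact le_next _
  · induction i with
    | zero => exact fun _ => ⟨isTotIso_iff_le_bperp.2 bot_le, finrank_bot F V⟩
    | succ i ih =>
      intro hi
      obtain ⟨hiso, hrank⟩ := ih (by lia)
      have hlt : 2 * finrank F (next^[i] ⊥ : Submodule F V) < finrank F V := by
        rw [hrank]; lia
      obtain ⟨hiso', hrank'⟩ := hnext _ hiso hlt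
      beta_reduce
      rw [Function.iterate_succ_apply']
      exact ⟨hiso', hrank'.trans (congrArg (· + 1) hrank)⟩

end IsSymplectic

end Symplectic

section Flags

variable {F V : Type} [Field F] [AddCommGroup V] [Module F V] {B : V →ₗ[F] V →ₗ[F] F}
  {J : Finset ℕ}

namespace SFlag

lemma space_injective : Function.Injective (space : SFlag B J → ℕ → Submodule F V) := by
  rintro ⟨⟩ ⟨⟩ rfl
  rfl

/-- The image of a flag under a linear isometry of the form. -/
def map (g : V ≃ₗ[F] V) (hg : ∀ x y, B (g x) (g y) = B x y) (C : SFlag B J) : SFlag B J where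
  space i := (C.space i).map (g : V →ₗ[F] V)
  isotropic i hi := by
    rintro _ ⟨u, hu, rfl⟩ _ ⟨w, hw, rfl⟩
    exact (hg u w).trans (C.isotropic i hi u hu w hw)
  finrank_eq i hi := (LinearEquiv.finrank_map_eq g (C.space i)).trans (C.finrank_eq i hi)
  mono i hi j hj hij := Submodule.map_mono (C.mono i hi j hj hij)
  eq_bot i hi := by rw [C.eq_bot i hi, Submodule.map_bot]

lemma map_injective (g : V ≃ₗ[F] V) (hg : ∀ x y, B (g x) (g y) = B x y) :
    Function.Injective (map (J := J) g hg) := fun _ _ h =>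
  space_injective <| funext fun i =>
    Submodule.map_injective_of_injective g.injective (congrFun (congrArg space h) i)

instance [Finite V] : Finite (SFlag B J) := by
  have : Finite (Submodule F V) := .of_injective _ SetLike.coe_injective
  refine .of_injective (fun C (i : J) => C.space i) fun C D h => space_injective ?_
  funext i
  by_cases hi : i ∈ J
  · exact congrFun h ⟨i, hi⟩
  · rw [C.eq_bot i hi, D.eq_bot i hi]

noncomputable instance [Finite V] : Fintype (SFlag B J) := Fintype.ofFinite _

lemma apply_eq_zero (C : SFlag B J) {i j : ℕ} (hi : i ∈ J) (hj : j ∈ J) {u v : V}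
    (hu : u ∈ C.space i) (hv : v ∈ C.space j) : B u v = 0 := by
  rcases le_total i j with hij | hji
  · exact C.isotropic j hj u (C.mono i hi j hj hij hu) v hv
  · exact C.isotropic i hi u hu v (C.mono j hj i hi hji hv)

end SFlag

lemma IsSymplectic.nonempty_sFlag [FiniteDimensional F V] (hB : IsSymplectic B)
    (hJ : ∀ i ∈ J, 2 * i ≤ finrank F V) : Nonempty (SFlag B J) := by
  obtain ⟨W, hmono, hW⟩ := hB.exists_monotone_isTotIso
  refine ⟨⟨fun i => if i ∈ J then W i else ⊥, fun i hi => ?_, fun i hi => ?_,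
    fun i hi j hj hij => ?_, fun i hi => if_neg hi⟩⟩
  · simpa only [if_pos hi] using (hW i (hJ i hi)).1
  · rw [show (if i ∈ J then W i else ⊥) = W i from if_pos hi]
    exact (hW i (hJ i hi)).2
  · simpa only [if_pos hi, if_pos hj] using hmono hij

end Flags

/-! ### Orthogonality in a finite symplectic space -/

section FiniteSpace

variable {F V : Type} [Field F] [Fintype F] [AddCommGroup V] [Module F V]
  {B : V →ₗ[F] V →ₗ[F] F} {T : Submodule F V} {u v : V}

local notation "Q" => (Fintype.card F : ℝ)
local notation "M" => (Fintype.card V : ℝ)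

variable (F) in
lemma one_lt_fieldCard : 1 < Q := by
  exact_mod_cast Fintype.one_lt_card (α := F)

variable (F) in
lemma fieldCard_pos : 0 < Q :=
  zero_lt_one.trans (one_lt_fieldCard F)

/-- The kernel `𝟙[v ⊥ w] - 1/q`: the orthogonality relation minus its density. -/
noncomputable def perpKernel (B : V →ₗ[F] V →ₗ[F] F) (v w : V) : ℝ :=
  𝟙[B v w = 0] - 1 / Q

variable [Fintype V]

variable (F V) in
lemma card_eq_fieldCard_pow_finrank : M = Q ^ finrank F V := by
  exact_mod_cast Module.card_eq_pow_finrank (K := F) (V := V)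

lemma sum_mem_submodule (T : Submodule F V) : ∑ v, 𝟙[v ∈ T] = Q ^ finrank F T := by
  rw [sum_boole, ← Fintype.card_subtype, ← card_eq_fieldCard_pow_finrank F T]

lemma IsSymplectic.sum_mem_bperp_mul (hB : IsSymplectic B) (T : Submodule F V) :
    (∑ v, 𝟙[v ∈ bperp B T]) * Q ^ finrank F T = M := by
  rw [sum_mem_submodule, ← pow_add, hB.finrank_bperp_add_finrank,
    ← card_eq_fieldCard_pow_finrank F V]

lemma sum_mem_mul_perp_of_notMem (hv : ¬ T ≤ LinearMap.ker (B v)) :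
    (∑ w, 𝟙[w ∈ T] * 𝟙[B v w = 0]) * Q = Q ^ finrank F T := by
  have hne : (B v).domRestrict T ≠ 0 := fun h =>
    hv fun w hw => LinearMap.congr_fun h (⟨w, hw⟩ : T)
  have hker : (LinearMap.ker ((B v).domRestrict T)).map T.subtype = T ⊓ LinearMap.ker (B v) := by
    rw [LinearMap.domRestrict, LinearMap.ker_comp, Submodule.map_comap_subtype]
  have hrank : finrank F (T ⊓ LinearMap.ker (B v) : Submodule F V) + 1 = finrank F T := by
    rw [← hker, Submodule.finrank_map_subtype_eq]
    exact Module.Dual.finrank_ker_add_one_of_ne_zero hne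
  rw [← hrank, pow_succ, ← sum_mem_submodule]
  simp only [Submodule.mem_inf, LinearMap.mem_ker, ite_zero_mul_ite_zero, mul_one]

lemma IsAltForm.sum_mem_mul_perpKernel (hB : IsAltForm B) (T : Submodule F V) (v : V) :
    ∑ w, 𝟙[w ∈ T] * perpKernel B v w = Q ^ finrank F T * (1 - 1 / Q) * 𝟙[v ∈ bperp B T] := by
  have hQ := (fieldCard_pos F).ne'
  have hmem : v ∈ bperp B T ↔ T ≤ LinearMap.ker (B v) := by
    simp only [mem_bperp, SetLike.le_def, LinearMap.mem_ker, hB.apply_eq_zero_comm (v := v)]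
  have hsplit : ∑ w, 𝟙[w ∈ T] * perpKernel B v w
      = ∑ w, 𝟙[w ∈ T] * 𝟙[B v w = 0] - Q ^ finrank F T * (1 / Q) := by
    simp only [perpKernel, mul_sub, sum_sub_distrib, ← sum_mul, sum_mem_submodule]
  rw [hsplit, hmem]
  split_ifs with hv
  · have : ∀ w, 𝟙[w ∈ T] * 𝟙[B v w = 0] = 𝟙[w ∈ T] := fun w => by
      rw [ite_zero_mul_ite_zero, mul_one]
      exact if_congr (and_iff_left_of_imp fun hw => hv hw) rfl rfl
    simp only [this, sum_mem_submodule]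
    ring
  · rw [← sum_mem_mul_perp_of_notMem hv]
    field_simp
    ring

namespace IsSymplectic

lemma sum_perpKernel (hB : IsSymplectic B) (hv : v ≠ 0) : ∑ w, perpKernel B v w = 0 := by
  have htop : v ∉ bperp B ⊤ := fun h => hv <| hB.nondeg v fun w =>
    hB.alt.apply_eq_zero_comm.1 (mem_bperp.1 h w Submodule.mem_top)
  simpa [htop] using hB.alt.sum_mem_mul_perpKernel ⊤ v

lemma sum_perp_mul_perpKernel (hB : IsSymplectic B) (hu : u ≠ 0) (v : V) :
    ∑ w, 𝟙[B u w = 0] * perpKernel B v w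
      = M / Q * (1 - 1 / Q) * 𝟙[v ∈ Submodule.span F {u}] := by
  have hcard := hB.sum_mem_bperp_mul (Submodule.span F {u})
  rw [finrank_span_singleton hu, pow_one, sum_mem_submodule] at hcard
  have h := hB.alt.sum_mem_mul_perpKernel (bperp B (Submodule.span F {u})) v
  rw [hB.bperp_bperp, eq_div_of_mul_eq (fieldCard_pos F).ne' hcard] at h
  simpa only [mem_bperp_span_singleton] using h

lemma sum_perpKernel_mul_perpKernel (hB : IsSymplectic B) (hu : u ≠ 0) (hv : v ≠ 0) :
    ∑ w, perpKernel B u w * perpKernel B v w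
      = M / Q * (1 - 1 / Q) * 𝟙[v ∈ Submodule.span F {u}] := by
  rw [← hB.sum_perp_mul_perpKernel hu]
  conv_lhs => enter [2, w]; rw [perpKernel, sub_mul]
  rw [sum_sub_distrib, ← mul_sum, hB.sum_perpKernel hv, mul_zero, sub_zero]

lemma sum_abs_sum_perpKernel_mul_perpKernel_le (hB : IsSymplectic B) (hu : u ≠ 0) :
    ∑ v ∈ univ.erase (0 : V), |∑ w, perpKernel B u w * perpKernel B v w| ≤ M := by
  have hQ := one_lt_fieldCard F
  have hc : 0 ≤ M / Q * (1 - 1 / Q) :=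
    mul_nonneg (by positivity) (sub_nonneg.2 ((div_le_one (by linarith)).2 hQ.le))
  calc ∑ v ∈ univ.erase (0 : V), |∑ w, perpKernel B u w * perpKernel B v w|
      = ∑ v ∈ univ.erase (0 : V), M / Q * (1 - 1 / Q) * 𝟙[v ∈ Submodule.span F {u}] :=
        sum_congr rfl fun v hv => by
          rw [hB.sum_perpKernel_mul_perpKernel hu (ne_of_mem_erase hv),
            abs_of_nonneg (mul_nonneg hc (iverson_nonneg _))]
    _ ≤ ∑ v, M / Q * (1 - 1 / Q) * 𝟙[v ∈ Submodule.span F {u}] :=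
        sum_le_sum_of_subset_of_nonneg (erase_subset _ _) fun v _ _ =>
          mul_nonneg hc (iverson_nonneg _)
    _ = M * (1 - 1 / Q) := by
        rw [← mul_sum, sum_mem_submodule, finrank_span_singleton hu]
        field_simp
    _ ≤ M := mul_le_of_le_one_right (by positivity) (sub_le_self _ (by positivity))

/-- By `sum_perpKernel_mul_perpKernel`, the functions `perpKernel B v` for `v` in distinct lines are
orthogonal in `ℓ²(V)`. -/
lemma sum_sq_sum_mul_perpKernel_le (hB : IsSymplectic B) {a : V → ℝ} (ha : a 0 = 0) :
    ∑ w, (∑ v, a v * perpKernel B v w) ^ 2 ≤ M * ∑ v, a v ^ 2 := by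
  have hcomm (u v : V) : ∑ w, perpKernel B u w * perpKernel B v w
      = ∑ w, perpKernel B v w * perpKernel B u w := sum_congr rfl fun w _ => mul_comm _ _
  have herase (w : V) : ∑ v, a v * perpKernel B v w
      = ∑ v ∈ univ.erase 0, a v * perpKernel B v w := (sum_erase _ (by rw [ha, zero_mul])).symm
  calc ∑ w, (∑ v, a v * perpKernel B v w) ^ 2
      = ∑ w, ∑ u ∈ univ.erase 0, ∑ v ∈ univ.erase 0,
          a u * a v * (perpKernel B u w * perpKernel B v w) :=
        sum_congr rfl fun w _ => by
          rw [herase, sq, sum_mul_sum]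
          exact sum_congr rfl fun u _ => sum_congr rfl fun v _ => mul_mul_mul_comm _ _ _ _
    _ = ∑ u ∈ univ.erase 0, ∑ v ∈ univ.erase 0,
          a u * a v * ∑ w, perpKernel B u w * perpKernel B v w := by
        simp only [mul_sum]
        rw [sum_comm]
        exact sum_congr rfl fun u _ => sum_comm
    _ ≤ M * ∑ v ∈ univ.erase 0, a v ^ 2 :=
        sum_sum_mul_mul_le_of_sum_abs_le (fun u _ v _ => hcomm u v) fun u hu =>
          hB.sum_abs_sum_perpKernel_mul_perpKernel_le (ne_of_mem_erase hu)
    _ = M * ∑ v, a v ^ 2 := by rw [sum_erase _ (by rw [ha, zero_pow two_ne_zero])]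

lemma sum_sum_mul_perpKernel_le (hB : IsSymplectic B) {a : V → ℝ} (ha : a 0 = 0) (b : V → ℝ) :
    ∑ v, ∑ w, a v * b w * perpKernel B v w ≤ √(M * (∑ v, a v ^ 2) * ∑ w, b w ^ 2) := by
  refine Real.le_sqrt_of_sq_le ?_
  have hinner : ∑ v, ∑ w, a v * b w * perpKernel B v w
      = ∑ w, b w * ∑ v, a v * perpKernel B v w := by
    rw [sum_comm]
    exact sum_congr rfl fun w _ => by
      rw [mul_sum]
      exact sum_congr rfl fun v _ => by ring
  calc (∑ v, ∑ w, a v * b w * perpKernel B v w) ^ 2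
      ≤ (∑ w, b w ^ 2) * ∑ w, (∑ v, a v * perpKernel B v w) ^ 2 :=
        hinner ▸ sum_mul_sq_le_sq_mul_sq _ _ _
    _ ≤ (∑ w, b w ^ 2) * (M * ∑ v, a v ^ 2) :=
        mul_le_mul_of_nonneg_left (hB.sum_sq_sum_mul_perpKernel_le ha)
          (sum_nonneg fun _ _ => sq_nonneg _)
    _ = M * (∑ v, a v ^ 2) * ∑ w, b w ^ 2 := mul_comm _ _

lemma sum_sum_mul_perp_le (hB : IsSymplectic B) {a : V → ℝ} (ha : a 0 = 0) (b : V → ℝ) :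
    ∑ v, ∑ w, a v * b w * 𝟙[B v w = 0]
      ≤ (∑ v, a v) * (∑ w, b w) / Q + √(M * (∑ v, a v ^ 2) * ∑ w, b w ^ 2) := by
  have h := hB.sum_sum_mul_perpKernel_le ha b
  simp only [perpKernel, mul_sub, sum_sub_distrib, ← sum_mul] at h
  rw [← sum_mul_sum] at h
  linarith [mul_one_div ((∑ v, a v) * ∑ w, b w) Q]

end IsSymplectic

end FiniteSpace

/-! ### Counting flags through a totally isotropic subspace -/

lemma mul_le_of_mul_div_sub_le {x y m t p : ℝ} (hx : 0 ≤ x) (ht : 0 < t) (hp : 1 < p)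
    (hm : p * t ^ 2 ≤ m) (h : x * (m / t - t) ≤ y * (p - 1)) : x * m ≤ p * t * y := by
  have hmul : x * (m - t ^ 2) ≤ t * (y * (p - 1)) :=
    calc x * (m - t ^ 2) = t * (x * (m / t - t)) := by field_simp
      _ ≤ t * (y * (p - 1)) := mul_le_mul_of_nonneg_left h ht.le
  refine le_of_mul_le_mul_left ?_ (sub_pos.2 hp)
  nlinarith [mul_le_mul_of_nonneg_left hm hx, mul_le_mul_of_nonneg_left hmul (by linarith : 0 ≤ p)]

section StarCount

variable {F V : Type} [Field F] [AddCommGroup V] [Module F V] [Fintype V]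
  {B : V →ₗ[F] V →ₗ[F] F} {J : Finset ℕ} {i j k : ℕ} {T : Submodule F V} {u v w : V}

local notation "Q" => (Fintype.card F : ℝ)
local notation "M" => (Fintype.card V : ℝ)

/-- The number of flags of type `J` whose `j`-th space contains `T`. -/
noncomputable def starCount (B : V →ₗ[F] V →ₗ[F] F) (J : Finset ℕ) (j : ℕ)
    (T : Submodule F V) : ℝ :=
  ∑ C : SFlag B J, 𝟙[T ≤ C.space j]

/-- The number of flags of type `J` whose `j`-th space contains `T` and whose `i`-th space
contains `v`. -/
noncomputable def pointedStarCount (B : V →ₗ[F] V →ₗ[F] F) (J : Finset ℕ) (j i : ℕ)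
    (T : Submodule F V) (v : V) : ℝ :=
  ∑ C : SFlag B J, 𝟙[T ≤ C.space j] * 𝟙[v ∈ C.space i]

lemma pointedStarCount_self (T : Submodule F V) (v : V) :
    pointedStarCount B J j j T v = starCount B J j (T ⊔ Submodule.span F {v}) := by
  simp only [pointedStarCount, starCount, sup_le_iff, Submodule.span_singleton_le_iff_mem,
    ite_zero_mul_ite_zero, mul_one]

lemma starCount_nonneg : 0 ≤ starCount B J j T :=
  sum_nonneg fun _ _ => iverson_nonneg _

lemma pointedStarCount_nonneg : 0 ≤ pointedStarCount B J j i T v :=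
  sum_nonneg fun _ _ => mul_nonneg (iverson_nonneg _) (iverson_nonneg _)

lemma pointedStarCount_le : pointedStarCount B J j i T v ≤ starCount B J j T :=
  sum_le_sum fun _ _ => mul_le_of_le_one_right (iverson_nonneg _) (iverson_le_one _)

lemma pointedStarCount_eq_zero (hi : i ∈ J) (hj : j ∈ J) (h : ¬ (IsTotIso B T ∧ v ∈ bperp B T)) :
    pointedStarCount B J j i T v = 0 := by
  refine sum_eq_zero fun C _ => ?_
  rw [ite_zero_mul_ite_zero, if_neg]
  rintro ⟨hT, hv⟩
  exact h ⟨fun x hx y hy => C.isotropic j hj x (hT hx) y (hT hy),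
    mem_bperp.2 fun x hx => C.apply_eq_zero hj hi (hT hx) hv⟩

namespace IsSymplectic

lemma pointedStarCount_congr (hB : IsSymplectic B) (hv : v ∈ bperp B T) (hvT : v ∉ T)
    (hw : w ∈ bperp B T) (hwT : w ∉ T) :
    pointedStarCount B J j i T v = pointedStarCount B J j i T w := by
  obtain ⟨g, hg, hgT, rfl⟩ := hB.exists_isometry hv hvT hw hwT
  have hfix : T.map (g : V →ₗ[F] V) = T := by
    ext x
    refine ⟨?_, fun hx => ⟨x, hx, hgT x hx⟩⟩
    rintro ⟨t, ht, rfl⟩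
    rwa [LinearEquiv.coe_coe, hgT t ht]
  refine Fintype.sum_bijective _ (SFlag.map_injective g hg).bijective_of_finite _ _ fun C => ?_
  have hle : T ≤ (C.map g hg).space j ↔ T ≤ C.space j := by
    conv_lhs => rw [← hfix]
    exact Submodule.map_le_map_iff_of_injective g.injective _ _
  have hmem : g v ∈ (C.map g hg).space i ↔ v ∈ C.space i :=
    g.injective.mem_set_image (s := (C.space i : Set V))
  rw [hle, hmem]

variable [Fintype F]

lemma sum_mem_bperp_and_notMem (hB : IsSymplectic B) (hT : IsTotIso B T) :
    ∑ w, 𝟙[w ∈ bperp B T ∧ w ∉ T] = M / Q ^ finrank F T - Q ^ finrank F T := by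
  have hsplit (w : V) : 𝟙[w ∈ bperp B T ∧ w ∉ T] = 𝟙[w ∈ bperp B T] - 𝟙[w ∈ T] := by
    by_cases hw : w ∈ T
    · simp [hw, hT.le_bperp hw]
    · simp [hw]
  simp only [hsplit, sum_sub_distrib, sum_mem_submodule T,
    eq_div_of_mul_eq (pow_pos (fieldCard_pos F) _).ne' (hB.sum_mem_bperp_mul T)]

lemma pointedStarCount_mul (hB : IsSymplectic B) (hT : IsTotIso B T) (hv : v ∈ bperp B T)
    (hvT : v ∉ T) :
    pointedStarCount B J j i T v * (M / Q ^ finrank F T - Q ^ finrank F T)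
      = ∑ C : SFlag B J, 𝟙[T ≤ C.space j] *
          ∑ w, 𝟙[w ∈ bperp B T ∧ w ∉ T] * 𝟙[w ∈ C.space i] := by
  calc pointedStarCount B J j i T v * (M / Q ^ finrank F T - Q ^ finrank F T)
      = ∑ w, 𝟙[w ∈ bperp B T ∧ w ∉ T] * pointedStarCount B J j i T w := by
        rw [← hB.sum_mem_bperp_and_notMem hT, mul_comm, sum_mul]
        refine sum_congr rfl fun w _ => ?_
        split_ifs with hw
        · rw [hB.pointedStarCount_congr hv hvT hw.1 hw.2]
        · rw [zero_mul, zero_mul]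
    _ = _ := by
        simp only [pointedStarCount, mul_sum]
        rw [sum_comm]
        exact sum_congr rfl fun C _ => sum_congr rfl fun w _ => mul_left_comm _ _ _

lemma starCount_sup_span_singleton_mul (hB : IsSymplectic B) (hj : j ∈ J) (hT : IsTotIso B T)
    (hv : v ∈ bperp B T) (hvT : v ∉ T) :
    starCount B J j (T ⊔ Submodule.span F {v}) * (M / Q ^ finrank F T - Q ^ finrank F T)
      = starCount B J j T * (Q ^ j - Q ^ finrank F T) := by
  rw [← pointedStarCount_self, hB.pointedStarCount_mul hT hv hvT, starCount, sum_mul]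
  refine sum_congr rfl fun C _ => ?_
  split_ifs with hTC
  · have hsplit (w : V) : 𝟙[w ∈ bperp B T ∧ w ∉ T] * 𝟙[w ∈ C.space j]
        = 𝟙[w ∈ C.space j] - 𝟙[w ∈ T] := by
      by_cases hwC : w ∈ C.space j
      · have : w ∈ bperp B T := mem_bperp.2 fun t ht => C.isotropic j hj t (hTC ht) w hwC
        by_cases hwT : w ∈ T <;> simp [*]
      · have hwT : w ∉ T := fun hw => hwC (hTC hw)
        simp [hwC, hwT]
    simp only [hsplit, sum_sub_distrib, sum_mem_submodule, C.finrank_eq j hj]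
  · rw [zero_mul, zero_mul]

lemma pointedStarCount_mul_le (hB : IsSymplectic B) (hi : i ∈ J) (hj : j ∈ J) (hi0 : 0 < i)
    (hM : Q ^ (i + 2 * finrank F T) ≤ M) (hvT : v ∉ T) :
    pointedStarCount B J j i T v * M ≤ Q ^ (i + finrank F T) * starCount B J j T := by
  by_cases h : IsTotIso B T ∧ v ∈ bperp B T
  swap
  · rw [pointedStarCount_eq_zero hi hj h, zero_mul]
    exact mul_nonneg (by positivity) starCount_nonneg
  have hQ := one_lt_fieldCard F
  have hcard : pointedStarCount B J j i T v * (M / Q ^ finrank F T - Q ^ finrank F T)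
      ≤ starCount B J j T * (Q ^ i - 1) := by
    rw [hB.pointedStarCount_mul h.1 h.2 hvT, starCount, sum_mul]
    refine sum_le_sum fun C _ => mul_le_mul_of_nonneg_left ?_ (iverson_nonneg _)
    have hne (w : V) : 𝟙[w ∈ bperp B T ∧ w ∉ T] * 𝟙[w ∈ C.space i]
        ≤ 𝟙[w ∈ C.space i] - 𝟙[w ∈ (⊥ : Submodule F V)] := by
      rcases eq_or_ne w 0 with rfl | hw
      · simp
      · rw [if_neg (mt (Submodule.mem_bot F).1 hw), sub_zero]
        exact mul_le_of_le_one_left (iverson_nonneg _) (iverson_le_one _)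
    refine (sum_le_sum fun w _ => hne w).trans_eq ?_
    rw [sum_sub_distrib, sum_mem_submodule, sum_mem_submodule, C.finrank_eq i hi, finrank_bot,
      pow_zero]
  rw [pow_add]
  refine mul_le_of_mul_div_sub_le pointedStarCount_nonneg (pow_pos (by linarith) _)
    (one_lt_pow₀ hQ hi0.ne') ?_ hcard
  rwa [← pow_mul, mul_comm _ 2, ← pow_add]

end IsSymplectic

/-- The common value of `starCount B J j T` over all totally isotropic `T` of dimension `k`, as the
product obtained by adjoining one vector at a time. -/
noncomputable def isoStarCount [Fintype F] (B : V →ₗ[F] V →ₗ[F] F) (J : Finset ℕ)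
    (j k : ℕ) : ℝ :=
  Fintype.card (SFlag B J) * ∏ l ∈ range k, (Q ^ j - Q ^ l) / (M / Q ^ l - Q ^ l)

variable [Fintype F]

lemma fieldCard_pow_lt_card_div (hk : 2 * k < finrank F V) : Q ^ k < M / Q ^ k := by
  have hQ := one_lt_fieldCard F
  rw [lt_div_iff₀ (pow_pos (by linarith) k), ← pow_add, card_eq_fieldCard_pow_finrank F V]
  exact pow_lt_pow_right₀ hQ (by lia)

namespace IsSymplectic

theorem starCount_eq_isoStarCount (hB : IsSymplectic B) (hj : j ∈ J) (hT : IsTotIso B T) :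
    starCount B J j T = isoStarCount B J j (finrank F T) := by
  induction hk : finrank F T generalizing T with
  | zero =>
    obtain rfl := Submodule.finrank_eq_zero.1 hk
    simp [starCount, isoStarCount]
  | succ k ih =>
    obtain ⟨v, hv, hv0⟩ := T.exists_mem_ne_zero_of_ne_bot
      (fun h => by rw [h, finrank_bot] at hk; lia)
    obtain ⟨X, hX⟩ := exists_isCompl (Submodule.span F {v})
    have hsup : T ⊓ X ⊔ Submodule.span F {v} = T := by
      rw [inf_sup_assoc_of_le _ ((Submodule.span_singleton_le_iff_mem v T).2 hv), sup_comm,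
        hX.sup_eq_top, inf_top_eq]
    have hvX : v ∉ T ⊓ X := fun h => hv0 <| (Submodule.disjoint_def.1 hX.disjoint) v
      (Submodule.mem_span_singleton_self v) h.2
    have hiso : IsTotIso B (T ⊓ X) := fun x hx y hy => hT x hx.1 y hy.1
    have hrank : finrank F (T ⊓ X : Submodule F V) = k := by
      have := finrank_sup_span_singleton hvX
      rw [hsup] at this
      lia
    have hlt := fieldCard_pow_lt_card_div (F := F) (V := V) (k := k)
      (by have := hB.two_mul_finrank_le hT; lia)
    have hstep := hB.starCount_sup_span_singleton_mul hj hiso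
      (mem_bperp.2 fun t ht => hT t ht.1 v hv) hvX
    rw [hsup, hrank, ih hiso hrank, ← eq_div_iff (sub_pos.2 hlt).ne'] at hstep
    rw [hstep, isoStarCount, isoStarCount, prod_range_succ, mul_div_assoc, mul_assoc]

lemma starCount_span_singleton (hB : IsSymplectic B) (hj : j ∈ J) (hu : u ≠ 0) :
    starCount B J j (Submodule.span F {u}) = isoStarCount B J j 1 := by
  rw [hB.starCount_eq_isoStarCount hj (hB.alt.isTotIso_span_singleton u), finrank_span_singleton hu]

lemma sum_mem_space (hB : IsSymplectic B) (hj : j ∈ J) (hu : u ≠ 0) :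
    ∑ C : SFlag B J, 𝟙[u ∈ C.space j] = isoStarCount B J j 1 := by
  rw [← hB.starCount_span_singleton hj hu, starCount]
  simp only [Submodule.span_singleton_le_iff_mem]

end IsSymplectic

lemma isoStarCount_zero : isoStarCount B J j 0 = Fintype.card (SFlag B J) := by
  rw [isoStarCount, prod_range_zero, mul_one]

lemma isoStarCount_succ (hk : 2 * k < finrank F V) :
    isoStarCount B J j (k + 1) * (M / Q ^ k - Q ^ k) = isoStarCount B J j k * (Q ^ j - Q ^ k) := by
  have hlt := fieldCard_pow_lt_card_div (F := F) (V := V) hk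
  rw [isoStarCount, isoStarCount, prod_range_succ, ← mul_assoc, mul_assoc,
    div_mul_cancel₀ _ (sub_pos.2 hlt).ne']

lemma isoStarCount_nonneg (hk : k ≤ j + 1) (hkV : 2 * k ≤ finrank F V + 1) :
    0 ≤ isoStarCount B J j k := by
  refine mul_nonneg (Nat.cast_nonneg _) (prod_nonneg fun l hl => div_nonneg ?_ ?_)
  · exact sub_nonneg.2 (pow_le_pow_right₀ (one_lt_fieldCard F).le (by have := mem_range.1 hl; lia))
  · have := mem_range.1 hl
    exact sub_nonneg.2 (fieldCard_pow_lt_card_div (by lia)).le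

lemma isoStarCount_succ_mul_le (hk : k ≤ j) (hj : 0 < j) (hjV : j + 2 * k ≤ finrank F V) :
    isoStarCount B J j (k + 1) * M ≤ Q ^ (j + k) * isoStarCount B J j k := by
  have hQ := one_lt_fieldCard F
  rw [pow_add]
  refine mul_le_of_mul_div_sub_le (isoStarCount_nonneg (by lia) (by lia)) (pow_pos (by linarith) _)
    (one_lt_pow₀ hQ hj.ne') ?_ ?_
  · rw [← pow_mul, mul_comm k 2, ← pow_add, card_eq_fieldCard_pow_finrank F V]
    exact pow_le_pow_right₀ hQ.le hjV
  · rw [isoStarCount_succ (by lia)]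
    exact mul_le_mul_of_nonneg_left (sub_le_sub_left (one_le_pow₀ hQ.le) _)
      (isoStarCount_nonneg (by lia) (by lia))

end StarCount

/-! ### The level inequality -/

section Level

variable {F V : Type} [Field F] [AddCommGroup V] [Module F V]
  {B : V →ₗ[F] V →ₗ[F] F} {J : Finset ℕ} {𝓕 : Finset (SFlag B J)} {j n : ℕ}

local notation "Q" => (Fintype.card F : ℝ)
local notation "M" => (Fintype.card V : ℝ)

/-- The number of flags in `𝓕` whose `j`-th space contains the nonzero vector `v`; the vector `0`,
which lies in every space, is given degree `0`. -/
noncomputable def flagDegree (𝓕 : Finset (SFlag B J)) (j : ℕ) (v : V) : ℝ :=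
  if v = 0 then 0 else ∑ C ∈ 𝓕, 𝟙[v ∈ C.space j]

lemma flagDegree_zero : flagDegree 𝓕 j 0 = 0 := if_pos rfl

lemma flagDegree_nonneg (v : V) : 0 ≤ flagDegree 𝓕 j v := by
  rw [flagDegree]
  split_ifs
  exacts [le_rfl, sum_nonneg fun _ _ => iverson_nonneg _]

lemma sum_mul_flagDegree [Fintype V] (b : V → ℝ) :
    ∑ v, b v * flagDegree 𝓕 j v = ∑ C ∈ 𝓕, ((∑ v, 𝟙[v ∈ C.space j] * b v) - b 0) := by
  have hterm (v : V) : b v * flagDegree 𝓕 j v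
      = ∑ C ∈ 𝓕, (𝟙[v ∈ C.space j] * b v - if v = 0 then b v else 0) := by
    rw [flagDegree]
    split_ifs with hv
    · simp [hv]
    · simp only [sub_zero, mul_sum, mul_comm]
  simp only [hterm]
  rw [sum_comm]
  simp only [sum_sub_distrib, sum_ite_eq', mem_univ, if_true]

lemma IsEKRFlags.exists_not_spaceOpp (h𝓕 : IsEKRFlags (𝓕 : Set (SFlag B J)))
    {C C' : SFlag B J} (hC : C ∈ 𝓕) (hC' : C' ∈ 𝓕) :
    ∃ i ∈ J, ¬ SpaceOpp B (C.space i) (C'.space i) := by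
  simpa only [FlagOpp, SpaceOpp, not_forall, exists_prop] using h𝓕 C hC C' hC'

lemma IsEKRFlags.one_le_sum_not_spaceOpp (h𝓕 : IsEKRFlags (𝓕 : Set (SFlag B J)))
    {C C' : SFlag B J} (hC : C ∈ 𝓕) (hC' : C' ∈ 𝓕) :
    1 ≤ ∑ i ∈ J, 𝟙[¬ SpaceOpp B (C.space i) (C'.space i)] := by
  obtain ⟨i, hi, hopp⟩ := h𝓕.exists_not_spaceOpp hC hC'
  exact (if_pos hopp).ge.trans (single_le_sum
    (f := fun i => 𝟙[¬ SpaceOpp B (C.space i) (C'.space i)]) (fun i _ => iverson_nonneg _) hi)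

lemma IsEKRFlags.exists_le_sum_not_spaceOpp (h𝓕 : IsEKRFlags (𝓕 : Set (SFlag B J)))
    (hne : 𝓕.Nonempty) (hJ : #J ≤ n) :
    ∃ j ∈ J, (#𝓕 : ℝ) ^ 2 ≤ n * ∑ C' ∈ 𝓕, ∑ C ∈ 𝓕, 𝟙[¬ SpaceOpp B (C.space j) (C'.space j)] := by
  obtain ⟨C₀, hC₀⟩ := hne
  have hJne : J.Nonempty := (h𝓕.exists_not_spaceOpp hC₀ hC₀).imp fun _ h => h.1
  by_contra! h
  have hlt := sum_lt_sum_of_nonempty hJne h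
  rw [← mul_sum, sum_const, nsmul_eq_mul] at hlt
  have hge : (#𝓕 : ℝ) ^ 2
      ≤ ∑ j ∈ J, ∑ C' ∈ 𝓕, ∑ C ∈ 𝓕, 𝟙[¬ SpaceOpp B (C.space j) (C'.space j)] := by
    rw [sum_comm]
    calc (#𝓕 : ℝ) ^ 2 = ∑ C' ∈ 𝓕, ∑ C ∈ 𝓕, 1 := by simp [sq]
      _ ≤ _ := sum_le_sum fun C' hC' => by
        rw [sum_comm]
        exact sum_le_sum fun C hC => h𝓕.one_le_sum_not_spaceOpp hC hC'
  have hJ' : (#J : ℝ) ≤ n := by exact_mod_cast hJ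
  nlinarith [sq_nonneg (#𝓕 : ℝ)]

variable [Fintype F] [Fintype V]

lemma sum_flagDegree (hj : j ∈ J) : ∑ v, flagDegree 𝓕 j v = #𝓕 * (Q ^ j - 1) := by
  have h := sum_mul_flagDegree (𝓕 := 𝓕) (j := j) fun _ => 1
  simp only [one_mul, mul_one, sum_mem_submodule] at h
  rw [h, sum_congr rfl fun C _ => by rw [C.finrank_eq j hj], sum_const, nsmul_eq_mul]

lemma one_add_mul_not_spaceOpp_le (B : V →ₗ[F] V →ₗ[F] F) (S T : Submodule F V) :
    1 + (Q - 1) * 𝟙[¬ SpaceOpp B S T] ≤ ∑ v, 𝟙[v ∈ T] * 𝟙[v ∈ bperp B S] := by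
  have hQ := one_lt_fieldCard F
  have hcard : ∑ v, 𝟙[v ∈ T] * 𝟙[v ∈ bperp B S]
      = Q ^ finrank F (bperp B S ⊓ T : Submodule F V) := by
    simp only [← sum_mem_submodule, Submodule.mem_inf, ite_zero_mul_ite_zero, mul_one, and_comm]
  rw [hcard]
  split_ifs with h
  · linarith [one_le_pow₀ hQ.le (n := finrank F (bperp B S ⊓ T : Submodule F V))]
  · have hrank : finrank F (bperp B S ⊓ T : Submodule F V) ≠ 0 :=
      fun h0 => h (Submodule.finrank_eq_zero.1 h0)
    linarith [le_self_pow₀ hQ.le hrank]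

lemma IsAltForm.sum_perpKernel_mul_flagDegree (hB : IsAltForm B) (hj : j ∈ J) (v : V) :
    ∑ w, perpKernel B v w * flagDegree 𝓕 j w
      = ∑ C ∈ 𝓕, (1 - 1 / Q) * (Q ^ j * 𝟙[v ∈ bperp B (C.space j)] - 1) := by
  rw [sum_mul_flagDegree]
  refine sum_congr rfl fun C _ => ?_
  rw [hB.sum_mem_mul_perpKernel, C.finrank_eq j hj, perpKernel, map_zero, if_pos rfl]
  ring

lemma IsAltForm.sum_sum_flagDegree_mul_perpKernel (hB : IsAltForm B) (hj : j ∈ J) :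
    ∑ v, ∑ w, flagDegree 𝓕 j v * flagDegree 𝓕 j w * perpKernel B v w
      = ∑ C' ∈ 𝓕, ∑ C ∈ 𝓕, (1 - 1 / Q) *
          (Q ^ j * (∑ v, 𝟙[v ∈ C'.space j] * 𝟙[v ∈ bperp B (C.space j)]) - 2 * Q ^ j + 1) := by
  have hinner (v : V) : ∑ w, flagDegree 𝓕 j v * flagDegree 𝓕 j w * perpKernel B v w
      = (∑ C ∈ 𝓕, (1 - 1 / Q) * (Q ^ j * 𝟙[v ∈ bperp B (C.space j)] - 1)) * flagDegree 𝓕 j v := by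
    rw [← hB.sum_perpKernel_mul_flagDegree hj, sum_mul]
    exact sum_congr rfl fun w _ => by ring
  simp only [hinner]
  rw [sum_mul_flagDegree]
  refine sum_congr rfl fun C' _ => ?_
  simp only [mul_sum]
  rw [sum_comm, ← sum_sub_distrib]
  refine sum_congr rfl fun C _ => ?_
  have hcard : ∑ v, 𝟙[v ∈ C'.space j] = Q ^ j := by
    rw [sum_mem_submodule, C'.finrank_eq j hj]
  have hterm (v : V) : 𝟙[v ∈ C'.space j] * ((1 - 1 / Q) * (Q ^ j * 𝟙[v ∈ bperp B (C.space j)] - 1))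
      = (1 - 1 / Q) * Q ^ j * (𝟙[v ∈ C'.space j] * 𝟙[v ∈ bperp B (C.space j)])
        - (1 - 1 / Q) * 𝟙[v ∈ C'.space j] := by ring
  simp only [hterm, sum_sub_distrib]
  rw [← mul_sum, ← mul_sum, ← mul_sum, hcard, if_pos (Submodule.zero_mem _)]
  ring

lemma IsSymplectic.sum_not_spaceOpp_le (hB : IsSymplectic B) (hj : j ∈ J) :
    Q ^ j * (1 - 1 / Q) * ((Q - 1) * ∑ C' ∈ 𝓕, ∑ C ∈ 𝓕, 𝟙[¬ SpaceOpp B (C.space j) (C'.space j)])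
      ≤ Q ^ j * (1 - 1 / Q) * #𝓕 ^ 2 + √M * ∑ v, flagDegree 𝓕 j v ^ 2 := by
  have hQ := one_lt_fieldCard F
  have hc : 0 ≤ 1 - 1 / Q := sub_nonneg.2 ((div_le_one (by linarith)).2 hQ.le)
  have hspec := hB.sum_sum_mul_perpKernel_le (flagDegree_zero (𝓕 := 𝓕) (j := j)) (flagDegree 𝓕 j)
  rw [hB.alt.sum_sum_flagDegree_mul_perpKernel hj, mul_assoc, Real.sqrt_mul (Nat.cast_nonneg _),
    Real.sqrt_mul_self (sum_nonneg fun _ _ => sq_nonneg _)] at hspec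
  have hpair : ∑ C' ∈ 𝓕, ∑ C ∈ 𝓕, Q ^ j * (1 - 1 / Q) *
        ((Q - 1) * 𝟙[¬ SpaceOpp B (C.space j) (C'.space j)] - 1)
      ≤ √M * ∑ v, flagDegree 𝓕 j v ^ 2 := by
    refine (sum_le_sum fun C' _ => sum_le_sum fun C _ => ?_).trans hspec
    have := mul_le_mul_of_nonneg_left (one_add_mul_not_spaceOpp_le B (C.space j) (C'.space j))
      (mul_nonneg (pow_nonneg (zero_le_one.trans hQ.le) j) hc)
    linarith
  simp only [mul_sub, sum_sub_distrib, sum_const, nsmul_eq_mul, ← mul_sum] at hpair ⊢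
  linarith

lemma IsEKRFlags.exists_level (h𝓕 : IsEKRFlags (𝓕 : Set (SFlag B J))) (hB : IsSymplectic B)
    (hne : 𝓕.Nonempty) (hJ : #J ≤ n) (hn : 16 * n ≤ Q) :
    ∃ j ∈ J, Q * Q ^ j * #𝓕 ^ 2 ≤ 4 * n * √M * ∑ v, flagDegree 𝓕 j v ^ 2 := by
  obtain ⟨j, hj, hle⟩ := h𝓕.exists_le_sum_not_spaceOpp hne hJ
  refine ⟨j, hj, ?_⟩
  have hQ := one_lt_fieldCard F
  have hc : 1 - 1 / Q = (Q - 1) / Q := by field_simp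
  have hspec := hB.sum_not_spaceOpp_le (𝓕 := 𝓕) hj
  have hnQ : Q / 4 ≤ (Q - 1) / Q * (Q - 1 - n) := by
    have hn1 : (1 : ℝ) ≤ n := by exact_mod_cast (card_pos.2 ⟨j, hj⟩).trans_le hJ
    rw [div_mul_eq_mul_div, le_div_iff₀ (by linarith)]
    nlinarith
  have hmain : Q ^ j * ((Q - 1) / Q * (Q - 1 - n)) * #𝓕 ^ 2
      ≤ n * (√M * ∑ v, flagDegree 𝓕 j v ^ 2) := by
    have hn0 : (0 : ℝ) ≤ n := Nat.cast_nonneg n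
    have := mul_le_mul_of_nonneg_left hspec hn0
    have hcoef : 0 ≤ Q ^ j * ((Q - 1) / Q) * (Q - 1) :=
      mul_nonneg (mul_nonneg (by positivity) (div_nonneg (by linarith) (by linarith))) (by linarith)
    have := mul_le_mul_of_nonneg_left hle hcoef
    rw [hc] at *
    linarith
  have hf : 0 ≤ Q ^ j * (#𝓕 : ℝ) ^ 2 := by positivity
  nlinarith [mul_le_mul_of_nonneg_left hnQ hf]

end Level

/-! ### Flags through two independent vectors -/

section TwoVectors

variable {F V : Type} [Field F] [AddCommGroup V] [Module F V] [Fintype V]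
  {B : V →ₗ[F] V →ₗ[F] F} {J : Finset ℕ} {𝓕 : Finset (SFlag B J)} {i j n : ℕ}
  {T : Submodule F V} {u u' v w : V}

local notation "Q" => (Fintype.card F : ℝ)
local notation "M" => (Fintype.card V : ℝ)

/-- The number of flags of type `J` whose `j`-th space contains `u` and whose `i`-th space is
orthogonal to `v`. -/
noncomputable def perpStarCount (B : V →ₗ[F] V →ₗ[F] F) (J : Finset ℕ) (j i : ℕ) (u v : V) : ℝ :=
  ∑ C : SFlag B J, 𝟙[u ∈ C.space j] * 𝟙[v ∈ bperp B (C.space i)]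

lemma perpStarCount_nonneg : 0 ≤ perpStarCount B J j i u v :=
  sum_nonneg fun _ _ => mul_nonneg (iverson_nonneg _) (iverson_nonneg _)

lemma IsSymplectic.exists_pointedStarCount_eq (hB : IsSymplectic B) (hi : i ∈ J) (hj : j ∈ J)
    (T : Submodule F V) :
    ∃ α, 0 ≤ α ∧ ∀ w ∉ T, pointedStarCount B J j i T w = α * 𝟙[w ∈ bperp B T] := by
  have hzero {w : V} (hw : w ∉ bperp B T) : pointedStarCount B J j i T w = 0 :=
    pointedStarCount_eq_zero hi hj fun h => hw h.2
  by_cases h : ∃ w₀ ∈ bperp B T, w₀ ∉ T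
  · obtain ⟨w₀, hw₀, hw₀T⟩ := h
    refine ⟨pointedStarCount B J j i T w₀, pointedStarCount_nonneg, fun w hwT => ?_⟩
    split_ifs with hw
    · rw [hB.pointedStarCount_congr hw hwT hw₀ hw₀T, mul_one]
    · rw [hzero hw, mul_zero]
  · push Not at h
    refine ⟨0, le_rfl, fun w hwT => ?_⟩
    rw [hzero fun hw => hwT (h w hw), zero_mul]

lemma IsEKRFlags.sum_mem_mul_mem_le (h𝓕 : IsEKRFlags (𝓕 : Set (SFlag B J))) (u u' : V) :
    ∑ C' ∈ 𝓕, ∑ C ∈ 𝓕, 𝟙[u' ∈ C'.space j] * 𝟙[u ∈ C.space j]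
      ≤ ∑ i ∈ J, ∑ C' : SFlag B J, ∑ C : SFlag B J, 𝟙[u' ∈ C'.space j] * 𝟙[u ∈ C.space j] *
        𝟙[¬ SpaceOpp B (C.space i) (C'.space i)] := by
  have hnonneg (i : ℕ) (C' C : SFlag B J) : 0 ≤ 𝟙[u' ∈ C'.space j] * 𝟙[u ∈ C.space j] *
      𝟙[¬ SpaceOpp B (C.space i) (C'.space i)] :=
    mul_nonneg (mul_nonneg (iverson_nonneg _) (iverson_nonneg _)) (iverson_nonneg _)
  calc _ ≤ ∑ C' ∈ 𝓕, ∑ C ∈ 𝓕, ∑ i ∈ J, 𝟙[u' ∈ C'.space j] * 𝟙[u ∈ C.space j] *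
        𝟙[¬ SpaceOpp B (C.space i) (C'.space i)] := by
        refine sum_le_sum fun C' hC' => sum_le_sum fun C hC => ?_
        rw [← mul_sum]
        exact le_mul_of_one_le_right (mul_nonneg (iverson_nonneg _) (iverson_nonneg _))
          (h𝓕.one_le_sum_not_spaceOpp hC hC')
    _ = ∑ i ∈ J, ∑ C' ∈ 𝓕, ∑ C ∈ 𝓕, 𝟙[u' ∈ C'.space j] * 𝟙[u ∈ C.space j] *
        𝟙[¬ SpaceOpp B (C.space i) (C'.space i)] := by
        rw [sum_congr rfl fun C' _ => sum_comm]
        exact sum_comm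
    _ ≤ _ := sum_le_sum fun i _ =>
        (sum_le_sum fun C' _ => sum_le_univ_sum_of_nonneg fun C => hnonneg i C' C).trans
          (sum_le_univ_sum_of_nonneg fun C' => sum_nonneg fun C _ => hnonneg i C' C)

variable [Fintype F]

lemma IsSymplectic.perpStarCount_le (hB : IsSymplectic B) (hj : j ∈ J) (hu : u ≠ 0) :
    perpStarCount B J j i u v ≤ isoStarCount B J j 1 := by
  rw [← hB.sum_mem_space hj hu]
  exact sum_le_sum fun _ _ => mul_le_of_le_one_right (iverson_nonneg _) (iverson_le_one _)

lemma IsAltForm.sum_pointedStarCount_mul_perpKernel (hB : IsAltForm B) (hi : i ∈ J) (u v : V) :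
    ∑ w, pointedStarCount B J j i (Submodule.span F {u}) w * perpKernel B v w
      = (1 - 1 / Q) * (Q ^ i * perpStarCount B J j i u v) := by
  simp only [pointedStarCount, perpStarCount, Submodule.span_singleton_le_iff_mem, sum_mul, mul_sum]
  rw [sum_comm]
  refine sum_congr rfl fun C _ => ?_
  simp only [mul_assoc, ← mul_sum]
  rw [hB.sum_mem_mul_perpKernel, C.finrank_eq i hi]
  ring

/-- The weights `pointedStarCount` are constant on `u^⊥ ∖ ⟨u⟩` and vanish off `u^⊥`, and the kernel
`perpKernel B v` sums to zero over `u^⊥`; only the line `⟨u⟩` contributes. -/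
lemma IsSymplectic.sum_pointedStarCount_mul_perpKernel_le (hB : IsSymplectic B) (hi : i ∈ J)
    (hj : j ∈ J) (hu : u ≠ 0) (hv : v ∉ Submodule.span F {u}) :
    ∑ w, pointedStarCount B J j i (Submodule.span F {u}) w * perpKernel B v w
      ≤ ∑ w, 𝟙[w ∈ Submodule.span F {u}] *
          (pointedStarCount B J j i (Submodule.span F {u}) w * perpKernel B v w) := by
  obtain ⟨α, hα, hA⟩ := hB.exists_pointedStarCount_eq hi hj (Submodule.span F {u})
  have hperp : ∑ w, 𝟙[B u w = 0] * perpKernel B v w = 0 := by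
    rw [hB.sum_perp_mul_perpKernel hu, if_neg hv, mul_zero]
  have hline : 0 ≤ ∑ w, 𝟙[w ∈ Submodule.span F {u}] * perpKernel B v w := by
    rw [hB.alt.sum_mem_mul_perpKernel]
    have hQ := one_lt_fieldCard F
    have hc : 0 ≤ 1 - 1 / Q := sub_nonneg.2 ((div_le_one (by linarith)).2 hQ.le)
    exact mul_nonneg (mul_nonneg (by positivity) hc) (iverson_nonneg _)
  have hsplit (w : V) : pointedStarCount B J j i (Submodule.span F {u}) w * perpKernel B v w
      = α * (𝟙[B u w = 0] * perpKernel B v w)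
        - α * (𝟙[w ∈ Submodule.span F {u}] * perpKernel B v w)
        + 𝟙[w ∈ Submodule.span F {u}] *
          (pointedStarCount B J j i (Submodule.span F {u}) w * perpKernel B v w) := by
    by_cases hw : w ∈ Submodule.span F {u}
    · have hperp : B u w = 0 :=
        mem_bperp_span_singleton.1 ((hB.alt.isTotIso_span_singleton u).le_bperp hw)
      rw [if_pos hw, if_pos hperp]
      ring
    · simp only [hA w hw, if_neg hw, mem_bperp_span_singleton]
      ring
  rw [sum_congr rfl fun w _ => hsplit w, sum_add_distrib, sum_sub_distrib, ← mul_sum, ← mul_sum,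
    hperp]
  linarith [mul_nonneg hα hline]

omit [Fintype V] in
lemma IsAltForm.perpKernel_le_of_mem_span (hB : IsAltForm B) (hw : w ∈ Submodule.span F {u})
    (v : V) : perpKernel B v w ≤ (1 - 1 / Q) * (𝟙[w = 0] + 𝟙[B u v = 0]) := by
  have hQ := one_lt_fieldCard F
  have hc : 0 ≤ 1 - 1 / Q := sub_nonneg.2 ((div_le_one (by linarith)).2 hQ.le)
  rw [perpKernel]
  by_cases hvw : B v w = 0
  · have : w = 0 ∨ B u v = 0 := by
      obtain ⟨c, rfl⟩ := Submodule.mem_span_singleton.1 hw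
      rw [map_smul, smul_eq_mul, mul_eq_zero] at hvw
      exact hvw.imp (fun hc => by rw [hc, zero_smul]) hB.apply_eq_zero_comm.1
    rw [if_pos hvw]
    refine le_mul_of_one_le_right hc ?_
    rcases this with h | h
    · rw [if_pos h]
      linarith [iverson_nonneg (B u v = 0)]
    · rw [if_pos h]
      linarith [iverson_nonneg (w = 0)]
  · rw [if_neg hvw, zero_sub]
    have := mul_nonneg hc (add_nonneg (iverson_nonneg (w = 0)) (iverson_nonneg (B u v = 0)))
    linarith [one_div_pos.2 (zero_lt_one.trans hQ)]

lemma IsSymplectic.pow_mul_perpStarCount_le (hB : IsSymplectic B) (hi : i ∈ J) (hj : j ∈ J)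
    (hu : u ≠ 0) (hv : v ∉ Submodule.span F {u}) :
    Q ^ i * perpStarCount B J j i u v ≤ isoStarCount B J j 1 * (1 + Q * 𝟙[B u v = 0]) := by
  have hQ := one_lt_fieldCard F
  have hc : 0 < 1 - 1 / Q := sub_pos.2 ((div_lt_one (by linarith)).2 hQ)
  have hN := hB.starCount_span_singleton hj hu
  have hN0 : 0 ≤ isoStarCount B J j 1 := hN ▸ starCount_nonneg
  have hterm (w : V) : 𝟙[w ∈ Submodule.span F {u}] *
        (pointedStarCount B J j i (Submodule.span F {u}) w * perpKernel B v w)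
      ≤ (1 - 1 / Q) * isoStarCount B J j 1 *
        (𝟙[w = 0] + 𝟙[B u v = 0] * 𝟙[w ∈ Submodule.span F {u}]) := by
    by_cases hw : w ∈ Submodule.span F {u}
    swap
    · rw [if_neg hw, zero_mul, mul_zero, add_zero]
      exact mul_nonneg (mul_nonneg hc.le hN0) (iverson_nonneg _)
    have hA : pointedStarCount B J j i (Submodule.span F {u}) w ≤ isoStarCount B J j 1 :=
      hN ▸ pointedStarCount_le
    rw [if_pos hw, one_mul, mul_one, mul_comm (1 - 1 / Q), mul_assoc]
    calc pointedStarCount B J j i (Submodule.span F {u}) w * perpKernel B v w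
        ≤ pointedStarCount B J j i (Submodule.span F {u}) w *
            ((1 - 1 / Q) * (𝟙[w = 0] + 𝟙[B u v = 0])) :=
          mul_le_mul_of_nonneg_left (hB.alt.perpKernel_le_of_mem_span hw v) pointedStarCount_nonneg
      _ ≤ isoStarCount B J j 1 * ((1 - 1 / Q) * (𝟙[w = 0] + 𝟙[B u v = 0])) :=
          mul_le_mul_of_nonneg_right hA
            (mul_nonneg hc.le (add_nonneg (iverson_nonneg _) (iverson_nonneg _)))
  have hsum := (hB.sum_pointedStarCount_mul_perpKernel_le hi hj hu hv).trans
    (sum_le_sum fun w _ => hterm w)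
  rw [hB.alt.sum_pointedStarCount_mul_perpKernel hi, ← mul_sum, sum_add_distrib, ← mul_sum,
    sum_mem_submodule, finrank_span_singleton hu, sum_ite_eq', if_pos (mem_univ _),
    mul_assoc] at hsum
  have := le_of_mul_le_mul_left hsum hc
  linarith

lemma IsSymplectic.sum_pointedStarCount_mul (hB : IsSymplectic B) (hi : i ∈ J) (hj : j ∈ J)
    (hu' : u' ≠ 0) (u : V) :
    ∑ v, pointedStarCount B J j i (Submodule.span F {u'}) v * (1 + Q * 𝟙[B u v = 0])
      = 2 * Q ^ i * isoStarCount B J j 1 + (Q - 1) * (Q ^ i * perpStarCount B J j i u' u) := by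
  have hQ := (fieldCard_pos F).ne'
  have hsum : ∑ v, pointedStarCount B J j i (Submodule.span F {u'}) v
      = Q ^ i * isoStarCount B J j 1 := by
    simp only [pointedStarCount, Submodule.span_singleton_le_iff_mem]
    rw [sum_comm, ← hB.sum_mem_space hj hu', mul_sum]
    refine sum_congr rfl fun C _ => ?_
    rw [← mul_sum, sum_mem_submodule, C.finrank_eq i hi, mul_comm]
  have hterm (v : V) : pointedStarCount B J j i (Submodule.span F {u'}) v * (1 + Q * 𝟙[B u v = 0])
      = 2 * pointedStarCount B J j i (Submodule.span F {u'}) v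
        + Q * (pointedStarCount B J j i (Submodule.span F {u'}) v * perpKernel B u v) := by
    rw [perpKernel, mul_left_comm, mul_sub, mul_one_div_cancel hQ]
    ring
  rw [sum_congr rfl fun v _ => hterm v, sum_add_distrib, ← mul_sum, ← mul_sum, hsum,
    hB.alt.sum_pointedStarCount_mul_perpKernel hi]
  field_simp

lemma IsSymplectic.pointedStarCount_mul_perpStarCount_le (hB : IsSymplectic B) (hi : i ∈ J)
    (hj : j ∈ J) (hi0 : 0 < i) (hiV : i + 2 ≤ finrank F V) (hu' : u' ≠ 0)
    (hind : u ∉ Submodule.span F {u'}) (hv : v ≠ 0) :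
    pointedStarCount B J j i (Submodule.span F {u'}) v * perpStarCount B J j i u v
      ≤ isoStarCount B J j 1 / Q ^ i *
          (pointedStarCount B J j i (Submodule.span F {u'}) v * (1 + Q * 𝟙[B u v = 0]))
        + Q ^ (i + 1) * isoStarCount B J j 1 ^ 2 / M * 𝟙[v ∈ Submodule.span F {u}] := by
  have hQ := one_lt_fieldCard F
  have hQ0 : 0 < Q := by linarith
  have hM : Q ^ (i + 2) ≤ M := by
    rw [card_eq_fieldCard_pow_finrank F V]
    exact pow_le_pow_right₀ hQ.le hiV
  have hu : u ≠ 0 := fun h => hind (h ▸ Submodule.zero_mem _)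
  have hN : 0 ≤ isoStarCount B J j 1 :=
    (perpStarCount_nonneg (i := i) (v := v)).trans (hB.perpStarCount_le hj hu)
  have hA : 0 ≤ pointedStarCount B J j i (Submodule.span F {u'}) v := pointedStarCount_nonneg
  by_cases hvu : v ∈ Submodule.span F {u}
  · have hvu' : v ∉ Submodule.span F {u'} := by
      obtain ⟨c, rfl⟩ := Submodule.mem_span_singleton.1 hvu
      have hc : c ≠ 0 := fun h => hv (by rw [h, zero_smul])
      rwa [Submodule.smul_mem_iff _ hc]
    have hAN := hB.pointedStarCount_mul_le (T := Submodule.span F {u'}) hi hj hi0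
      (by rwa [finrank_span_singleton hu']) hvu'
    rw [finrank_span_singleton hu', hB.starCount_span_singleton hj hu',
      ← le_div_iff₀ ((pow_pos hQ0 _).trans_le hM)] at hAN
    have hmul := mul_le_mul hAN (hB.perpStarCount_le (i := i) (v := v) hj hu)
      perpStarCount_nonneg (by positivity)
    rw [if_pos hvu, mul_one]
    refine le_add_of_nonneg_of_le (mul_nonneg (by positivity) (mul_nonneg hA ?_)) ?_
    · exact add_nonneg zero_le_one (mul_nonneg hQ0.le (iverson_nonneg _))
    · exact hmul.trans_eq (by ring)
  · have hT := hB.pow_mul_perpStarCount_le hi hj hu hvu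
    rw [if_neg hvu, mul_zero, add_zero, div_mul_eq_mul_div, le_div_iff₀ (by positivity)]
    linarith [mul_le_mul_of_nonneg_left hT hA]

lemma IsSymplectic.sum_mul_perpStarCount_le (hB : IsSymplectic B) (hi : i ∈ J) (hj : j ∈ J)
    (hi2 : 2 ≤ i) (hiV : i + 2 ≤ finrank F V) (hu' : u' ≠ 0) (hind : u ∉ Submodule.span F {u'}) :
    ∑ v ∈ univ.erase 0,
        pointedStarCount B J j i (Submodule.span F {u'}) v * perpStarCount B J j i u v
      ≤ 4 * isoStarCount B J j 1 ^ 2 := by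
  have hQ := one_lt_fieldCard F
  have hQ0 : 0 < Q := by linarith
  have hM : Q ^ (i + 2) ≤ M := by
    rw [card_eq_fieldCard_pow_finrank F V]
    exact pow_le_pow_right₀ hQ.le hiV
  have hu : u ≠ 0 := fun h => hind (h ▸ Submodule.zero_mem _)
  have hN : 0 ≤ isoStarCount B J j 1 :=
    (perpStarCount_nonneg (i := i) (v := 0)).trans (hB.perpStarCount_le hj hu)
  have hterm (v : V) : 0 ≤ isoStarCount B J j 1 / Q ^ i *
          (pointedStarCount B J j i (Submodule.span F {u'}) v * (1 + Q * 𝟙[B u v = 0]))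
        + Q ^ (i + 1) * isoStarCount B J j 1 ^ 2 / M * 𝟙[v ∈ Submodule.span F {u}] := by
    have := pointedStarCount_nonneg (B := B) (J := J) (j := j) (i := i)
      (T := Submodule.span F {u'}) (v := v)
    positivity
  have hT : Q ^ i * perpStarCount B J j i u' u ≤ isoStarCount B J j 1 * (1 + Q) :=
    (hB.pow_mul_perpStarCount_le hi hj hu' hind).trans <| by
      gcongr
      exact mul_le_of_le_one_right hQ0.le (iverson_le_one _)
  have hmain : 2 * Q ^ i * isoStarCount B J j 1 + (Q - 1) * (Q ^ i * perpStarCount B J j i u' u)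
      ≤ 3 * Q ^ i * isoStarCount B J j 1 := by
    have := mul_le_mul_of_nonneg_left hT (by linarith : 0 ≤ Q - 1)
    have := mul_le_mul_of_nonneg_left (pow_le_pow_right₀ hQ.le hi2) hN
    linarith
  refine ((sum_le_sum fun v hv => hB.pointedStarCount_mul_perpStarCount_le hi hj (by lia) hiV hu'
    hind (ne_of_mem_erase hv)).trans (sum_le_univ_sum_of_nonneg hterm)).trans ?_
  rw [sum_add_distrib, ← mul_sum, ← mul_sum, hB.sum_pointedStarCount_mul hi hj hu',
    sum_mem_submodule, finrank_span_singleton hu]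
  have hfirst := mul_le_mul_of_nonneg_left hmain (by positivity : 0 ≤ isoStarCount B J j 1 / Q ^ i)
  have hsecond := mul_le_mul_of_nonneg_right hM (sq_nonneg (isoStarCount B J j 1))
  rw [← div_le_iff₀' ((pow_pos hQ0 _).trans_le hM)] at hsecond
  calc _ ≤ isoStarCount B J j 1 / Q ^ i * (3 * Q ^ i * isoStarCount B J j 1)
        + Q ^ (i + 2) * isoStarCount B J j 1 ^ 2 / M := add_le_add hfirst (by ring_nf; rfl)
    _ ≤ 3 * isoStarCount B J j 1 ^ 2 + isoStarCount B J j 1 ^ 2 :=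
      add_le_add (by field_simp; rfl) hsecond
    _ = 4 * isoStarCount B J j 1 ^ 2 := by ring

lemma IsSymplectic.sum_mem_mul_mem_not_spaceOpp_le (hB : IsSymplectic B) (hi : i ∈ J) (hj : j ∈ J)
    (hi2 : 2 ≤ i) (hiV : i + 2 ≤ finrank F V) (hu' : u' ≠ 0) (hind : u ∉ Submodule.span F {u'}) :
    (Q - 1) * ∑ C' : SFlag B J, ∑ C : SFlag B J, 𝟙[u' ∈ C'.space j] * 𝟙[u ∈ C.space j] *
        𝟙[¬ SpaceOpp B (C.space i) (C'.space i)] ≤ 4 * isoStarCount B J j 1 ^ 2 := by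
  have hswap : ∑ v ∈ univ.erase 0,
        pointedStarCount B J j i (Submodule.span F {u'}) v * perpStarCount B J j i u v
      = ∑ C' : SFlag B J, ∑ C : SFlag B J, 𝟙[u' ∈ C'.space j] * 𝟙[u ∈ C.space j] *
          ∑ v ∈ univ.erase 0, 𝟙[v ∈ C'.space i] * 𝟙[v ∈ bperp B (C.space i)] := by
    simp only [pointedStarCount, perpStarCount, Submodule.span_singleton_le_iff_mem, sum_mul_sum]
    rw [sum_comm]
    refine sum_congr rfl fun C' _ => ?_
    rw [sum_comm]
    refine sum_congr rfl fun C _ => ?_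
    rw [mul_sum]
    exact sum_congr rfl fun v _ => mul_mul_mul_comm _ _ _ _
  refine le_trans ?_ (hB.sum_mul_perpStarCount_le hi hj hi2 hiV hu' hind)
  rw [hswap, mul_sum]
  refine sum_le_sum fun C' _ => ?_
  rw [mul_sum]
  refine sum_le_sum fun C _ => ?_
  rw [mul_left_comm]
  refine mul_le_mul_of_nonneg_left ?_ (mul_nonneg (iverson_nonneg _) (iverson_nonneg _))
  have h := one_add_mul_not_spaceOpp_le B (C.space i) (C'.space i)
  rw [← add_sum_erase _ _ (mem_univ 0), if_pos (Submodule.zero_mem _),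
    if_pos (Submodule.zero_mem _)] at h
  linarith

lemma IsEKRFlags.flagDegree_mul_flagDegree_le (h𝓕 : IsEKRFlags (𝓕 : Set (SFlag B J)))
    (hB : IsSymplectic B) (hJn : #J ≤ n) (hJ : ∀ i ∈ J, 2 ≤ i ∧ i + 2 ≤ finrank F V) (hj : j ∈ J)
    (hind : u ∉ Submodule.span F {u'}) :
    (Q - 1) * (flagDegree 𝓕 j u' * flagDegree 𝓕 j u) ≤ 4 * n * isoStarCount B J j 1 ^ 2 := by
  have hQ := one_lt_fieldCard F
  rcases eq_or_ne u' 0 with rfl | hu'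
  · rw [flagDegree_zero, zero_mul, mul_zero]
    positivity
  have hu : u ≠ 0 := fun h => hind (h ▸ Submodule.zero_mem _)
  rw [flagDegree, if_neg hu', flagDegree, if_neg hu, sum_mul_sum]
  calc (Q - 1) * ∑ C' ∈ 𝓕, ∑ C ∈ 𝓕, 𝟙[u' ∈ C'.space j] * 𝟙[u ∈ C.space j]
      ≤ ∑ i ∈ J, 4 * isoStarCount B J j 1 ^ 2 := by
        refine (mul_le_mul_of_nonneg_left (h𝓕.sum_mem_mul_mem_le u u') (by linarith)).trans ?_
        rw [mul_sum]
        exact sum_le_sum fun i hi =>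
          hB.sum_mem_mul_mem_not_spaceOpp_le hi hj (hJ i hi).1 (hJ i hi).2 hu' hind
    _ = 4 * #J * isoStarCount B J j 1 ^ 2 := by rw [sum_const, nsmul_eq_mul]; ring
    _ ≤ 4 * n * isoStarCount B J j 1 ^ 2 := by gcongr

end TwoVectors

/-! ### Local variance and the third moment -/

section ThirdMoment

variable {F V : Type} [Field F] [AddCommGroup V] [Module F V] [Fintype V]
  {B : V →ₗ[F] V →ₗ[F] F} {J : Finset ℕ} {j k : ℕ} {T : Submodule F V} {u w w' : V}

local notation "Q" => (Fintype.card F : ℝ)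
local notation "M" => (Fintype.card V : ℝ)

lemma sum_le_mul_sq_sum_mem (T : Submodule F V) (y : V → ℝ) :
    ∑ C : SFlag B J, 𝟙[T ≤ C.space j] * (∑ w, 𝟙[w ∈ C.space j] * y w) ^ 2
      = ∑ w, ∑ w', y w * y w' * pointedStarCount B J j j (T ⊔ Submodule.span F {w}) w' := by
  simp only [pointedStarCount, sup_le_iff, Submodule.span_singleton_le_iff_mem, sq, sum_mul_sum]
  simp only [mul_sum]
  rw [sum_comm]
  refine sum_congr rfl fun w _ => ?_
  rw [sum_comm]
  refine sum_congr rfl fun w' _ => sum_congr rfl fun C _ => ?_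
  have hand : 𝟙[T ≤ C.space j ∧ w ∈ C.space j] = 𝟙[T ≤ C.space j] * 𝟙[w ∈ C.space j] := by
    rw [ite_zero_mul_ite_zero, mul_one]
  rw [hand]
  ring

/-- The restriction of the function `z` to `u^⊥ ∖ ⟨u⟩`, the set of vectors outside `⟨u⟩` that lie in
some totally isotropic subspace containing `u`. -/
noncomputable def residuePart (B : V →ₗ[F] V →ₗ[F] F) (u : V) (z : V → ℝ) (w : V) : ℝ :=
  if B u w = 0 ∧ w ∉ Submodule.span F {u} then z w else 0

lemma IsAltForm.sum_residuePart (hB : IsAltForm B) (u : V) (z : V → ℝ) :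
    ∑ w, residuePart B u z w
      = (∑ w, 𝟙[B u w = 0] * z w) - ∑ w, 𝟙[w ∈ Submodule.span F {u}] * z w := by
  rw [← sum_sub_distrib]
  refine sum_congr rfl fun w _ => ?_
  by_cases hw : w ∈ Submodule.span F {u}
  · have : B u w = 0 := mem_bperp_span_singleton.1 ((hB.isTotIso_span_singleton u).le_bperp hw)
    simp [residuePart, hw, this]
  · simp [residuePart, hw]

lemma sum_sq_residuePart_le (B : V →ₗ[F] V →ₗ[F] F) (u : V) (z : V → ℝ) :
    ∑ w, residuePart B u z w ^ 2 ≤ ∑ w, 𝟙[B u w = 0] * z w ^ 2 := by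
  refine sum_le_sum fun w _ => ?_
  by_cases hw : B u w = 0 <;> by_cases hw' : w ∈ Submodule.span F {u} <;>
    simp [residuePart, hw, hw', sq_nonneg]

lemma SFlag.sum_mem_mul_eq_add (C : SFlag B J) (hj : j ∈ J) (hu : u ∈ C.space j) (z : V → ℝ) :
    ∑ w, 𝟙[w ∈ C.space j] * z w = (∑ w, 𝟙[w ∈ Submodule.span F {u}] * z w)
      + ∑ w, 𝟙[w ∈ C.space j] * residuePart B u z w := by
  rw [← sum_add_distrib]
  refine sum_congr rfl fun w _ => ?_
  by_cases hw : w ∈ Submodule.span F {u}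
  · simp [residuePart, hw, (Submodule.span_singleton_le_iff_mem _ _).2 hu hw]
  by_cases hwC : w ∈ C.space j
  · simp [residuePart, hw, hwC, C.apply_eq_zero hj hj hu hwC]
  · simp [hw, hwC]

variable [Fintype F]

lemma isoStarCount_succ_le (hk : k ≤ j) (hj : 0 < j) (hjV : j + 2 * k ≤ finrank F V) :
    isoStarCount B J j (k + 1) ≤ isoStarCount B J j k := by
  have hQ := one_lt_fieldCard F
  have hM : Q ^ (j + k) ≤ M := by
    rw [card_eq_fieldCard_pow_finrank F V]
    exact pow_le_pow_right₀ hQ.le (by lia)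
  have hM0 : 0 < M := (pow_pos (by linarith) _).trans_le hM
  have := mul_le_mul_of_nonneg_right hM (isoStarCount_nonneg (B := B) (J := J) (j := j) (k := k)
    (by lia) (by lia))
  refine le_of_mul_le_mul_right ?_ hM0
  linarith [isoStarCount_succ_mul_le (B := B) (J := J) hk hj hjV]

lemma sum_sup_span_singleton_eq_le (T : Submodule F V) (w : V) :
    ∑ w', 𝟙[T ⊔ Submodule.span F {w} = T ⊔ Submodule.span F {w'}] ≤ Q ^ (finrank F T + 1) := by
  have hrank : finrank F (T ⊔ Submodule.span F {w} : Submodule F V) ≤ finrank F T + 1 := by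
    by_cases hw : w ∈ T
    · rw [sup_eq_left.2 ((Submodule.span_singleton_le_iff_mem _ _).2 hw)]
      exact Nat.le_succ _
    · rw [finrank_sup_span_singleton hw]
  calc _ ≤ ∑ w', 𝟙[w' ∈ T ⊔ Submodule.span F {w}] := by
        refine sum_le_sum fun w' _ => ?_
        by_cases h : T ⊔ Submodule.span F {w} = T ⊔ Submodule.span F {w'}
        · have : w' ∈ T ⊔ Submodule.span F {w} :=
            h ▸ Submodule.mem_sup_right (Submodule.mem_span_singleton_self w')
          rw [if_pos h, if_pos this]
        · rw [if_neg h]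
          exact iverson_nonneg _
    _ ≤ Q ^ (finrank F T + 1) := by
        rw [sum_mem_submodule]
        exact pow_le_pow_right₀ (one_lt_fieldCard F).le hrank

namespace IsSymplectic

lemma pointedStarCount_sup_span_singleton (hB : IsSymplectic B) (hj : j ∈ J) (hT : IsTotIso B T)
    (hw : w ∈ bperp B T) (hwT : w ∉ T) (hw' : w' ∈ bperp B T) (hwT' : w' ∉ T) :
    pointedStarCount B J j j (T ⊔ Submodule.span F {w}) w'
      = isoStarCount B J j (finrank F T + 2) * 𝟙[B w w' = 0]
        + (isoStarCount B J j (finrank F T + 1) - isoStarCount B J j (finrank F T + 2)) *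
          𝟙[T ⊔ Submodule.span F {w} = T ⊔ Submodule.span F {w'}] := by
  have hiso := hT.sup_span_singleton hB.alt hw
  have hperp : w' ∈ bperp B (T ⊔ Submodule.span F {w}) ↔ B w w' = 0 := by
    refine ⟨fun h => mem_bperp.1 h w <|
      Submodule.mem_sup_right (Submodule.mem_span_singleton_self w),
      fun h => mem_bperp.2 fun x hx => ?_⟩
    obtain ⟨t, ht, _, hs, rfl⟩ := Submodule.mem_sup.1 hx
    obtain ⟨c, rfl⟩ := Submodule.mem_span_singleton.1 hs
    simp [mem_bperp.1 hw' t ht, h]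
  have hmem : w' ∈ T ⊔ Submodule.span F {w} ↔
      T ⊔ Submodule.span F {w} = T ⊔ Submodule.span F {w'} := by
    refine ⟨fun h => ?_,
      fun h => h ▸ Submodule.mem_sup_right (Submodule.mem_span_singleton_self w')⟩
    refine (Submodule.eq_of_le_of_finrank_eq ?_ ?_).symm
    · exact sup_le le_sup_left ((Submodule.span_singleton_le_iff_mem _ _).2 h)
    · rw [finrank_sup_span_singleton hwT, finrank_sup_span_singleton hwT']
  by_cases hmem' : w' ∈ T ⊔ Submodule.span F {w}
  · rw [pointedStarCount_self, sup_eq_left.2 ((Submodule.span_singleton_le_iff_mem _ _).2 hmem'),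
      hB.starCount_eq_isoStarCount hj hiso, finrank_sup_span_singleton hwT,
      if_pos (hperp.1 (hiso.le_bperp hmem')), if_pos (hmem.1 hmem')]
    ring
  rw [if_neg (mt hmem.2 hmem'), mul_zero, add_zero]
  by_cases hww' : B w w' = 0
  · rw [if_pos hww', mul_one, pointedStarCount_self, hB.starCount_eq_isoStarCount hj
      (hiso.sup_span_singleton hB.alt (hperp.2 hww')), finrank_sup_span_singleton hmem',
      finrank_sup_span_singleton hwT]
  · rw [if_neg hww', mul_zero, pointedStarCount_eq_zero hj hj fun h => hww' (hperp.1 h.2)]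

/-- In the residue of `T` a pair of points lies in a constant number of flags if it is orthogonal
and distinct, and the coincident pairs are controlled by Schur's test. -/
lemma sum_le_mul_sq_sum_mem_le (hB : IsSymplectic B) (hj : j ∈ J) (hT : IsTotIso B T)
    (hTj : finrank F T < j) (hjV : j + 2 * (finrank F T + 1) ≤ finrank F V) {y : V → ℝ}
    (hy : ∀ w, y w ≠ 0 → w ∈ bperp B T ∧ w ∉ T) :
    ∑ C : SFlag B J, 𝟙[T ≤ C.space j] * (∑ w, 𝟙[w ∈ C.space j] * y w) ^ 2
      ≤ isoStarCount B J j (finrank F T + 2) * ((∑ w, y w) ^ 2 / Q + √M * ∑ w, y w ^ 2)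
        + Q ^ (finrank F T + 1) * isoStarCount B J j (finrank F T + 1) * ∑ w, y w ^ 2 := by
  set N₁ := isoStarCount B J j (finrank F T + 1)
  set N₂ := isoStarCount B J j (finrank F T + 2)
  have hN₂ : 0 ≤ N₂ := isoStarCount_nonneg (by lia) (by lia)
  have hN : N₂ ≤ N₁ := isoStarCount_succ_le (by lia) (by lia) hjV
  have hpair (w w' : V) : y w * y w' * pointedStarCount B J j j (T ⊔ Submodule.span F {w}) w'
      = N₂ * (y w * y w' * 𝟙[B w w' = 0]) + (N₁ - N₂) *
        (y w * y w' * 𝟙[T ⊔ Submodule.span F {w} = T ⊔ Submodule.span F {w'}]) := by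
    rcases eq_or_ne (y w) 0 with hw | hw
    · simp [hw]
    rcases eq_or_ne (y w') 0 with hw' | hw'
    · simp [hw']
    rw [hB.pointedStarCount_sup_span_singleton hj hT (hy w hw).1 (hy w hw).2 (hy w' hw').1
      (hy w' hw').2]
    ring
  have hy0 : y 0 = 0 := of_not_not fun h => (hy 0 h).2 T.zero_mem
  have hperp := hB.sum_sum_mul_perp_le hy0 y
  rw [mul_assoc, Real.sqrt_mul (Nat.cast_nonneg _),
    Real.sqrt_mul_self (sum_nonneg fun _ _ => sq_nonneg _), ← sq] at hperp
  have hplane := sum_sum_mul_mul_le_of_sum_abs_le (S := univ) (a := y)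
    (k := fun w w' => 𝟙[T ⊔ Submodule.span F {w} = T ⊔ Submodule.span F {w'}])
    (D := Q ^ (finrank F T + 1)) (fun w _ w' _ => by simp only [eq_comm])
    fun w _ => by
      simpa only [abs_of_nonneg (iverson_nonneg _)] using sum_sup_span_singleton_eq_le T w
  rw [sum_le_mul_sq_sum_mem]
  simp only [hpair, sum_add_distrib, ← mul_sum]
  have hZ : 0 ≤ Q ^ (finrank F T + 1) * ∑ w, y w ^ 2 :=
    mul_nonneg (by positivity) (sum_nonneg fun _ _ => sq_nonneg _)
  linarith [mul_le_mul_of_nonneg_left hperp hN₂,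
    mul_le_mul_of_nonneg_left hplane (sub_nonneg.2 hN), mul_nonneg hN₂ hZ]

end IsSymplectic

lemma isoStarCount_succ_succ_mul_sqrt_le (hk : k + 1 ≤ j) (hjV : j + 2 * (k + 1) ≤ finrank F V)
    (hjM : Q ^ (j + 1) ≤ √M) :
    isoStarCount B J j (k + 2) * √M ≤ Q ^ k * isoStarCount B J j (k + 1) := by
  have hM : 0 < √M := (pow_pos (fieldCard_pos F) _).trans_le hjM
  have h := isoStarCount_succ_mul_le (B := B) (J := J) hk (by lia) hjV
  rw [← Real.mul_self_sqrt (Nat.cast_nonneg (Fintype.card V)), ← mul_assoc,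
    show j + (k + 1) = k + (j + 1) by ring, pow_add _ k, mul_right_comm _ (Q ^ (j + 1))] at h
  refine le_of_mul_le_mul_right (h.trans (mul_le_mul_of_nonneg_left hjM ?_)) hM
  exact mul_nonneg (pow_nonneg (fieldCard_pos F).le _) (isoStarCount_nonneg (by lia) (by lia))

lemma IsSymplectic.sum_mem_mul_sq_sum_residuePart_le (hB : IsSymplectic B) (hj : j ∈ J)
    (hj2 : 2 ≤ j) (hjV : j + 4 ≤ finrank F V) (hjM : Q ^ (j + 1) ≤ √M) (hu : u ≠ 0) (z : V → ℝ) :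
    ∑ C : SFlag B J, 𝟙[u ∈ C.space j] * (∑ w, 𝟙[w ∈ C.space j] * residuePart B u z w) ^ 2
      ≤ isoStarCount B J j 3 / Q * (∑ w, residuePart B u z w) ^ 2
        + 2 * Q ^ 2 * isoStarCount B J j 2 * ∑ w, 𝟙[B u w = 0] * z w ^ 2 := by
  have hQ := one_lt_fieldCard F
  have hN₂ : 0 ≤ isoStarCount B J j 2 := isoStarCount_nonneg (by lia) (by lia)
  have h := hB.sum_le_mul_sq_sum_mem_le hj (hB.alt.isTotIso_span_singleton u)
    (by rw [finrank_span_singleton hu]; lia) (by rw [finrank_span_singleton hu]; lia)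
    (y := residuePart B u z) fun w hw => by
      rw [mem_bperp_span_singleton]
      exact of_not_not fun h => hw (if_neg h)
  simp only [finrank_span_singleton hu, Submodule.span_singleton_le_iff_mem, Nat.reduceAdd] at h
  have hN₃ : isoStarCount B J j 3 * √M ≤ Q ^ 2 * isoStarCount B J j 2 :=
    (isoStarCount_succ_succ_mul_sqrt_le (by lia) (by lia) hjM).trans
      (mul_le_mul_of_nonneg_right (pow_le_pow_right₀ hQ.le one_le_two) hN₂)
  have hsq := sum_sq_residuePart_le B u z
  calc _ ≤ _ := h
    _ = isoStarCount B J j 3 / Q * (∑ w, residuePart B u z w) ^ 2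
        + (isoStarCount B J j 3 * √M + Q ^ 2 * isoStarCount B J j 2) *
          ∑ w, residuePart B u z w ^ 2 := by ring
    _ ≤ isoStarCount B J j 3 / Q * (∑ w, residuePart B u z w) ^ 2
        + (2 * Q ^ 2 * isoStarCount B J j 2) * ∑ w, 𝟙[B u w = 0] * z w ^ 2 := by
        gcongr
        linarith

lemma isoStarCount_three_div_nonneg (hj2 : 2 ≤ j) (hjV : j + 4 ≤ finrank F V) :
    0 ≤ isoStarCount B J j 3 / Q :=
  div_nonneg (isoStarCount_nonneg (by lia) (by lia)) (fieldCard_pos F).le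

/-- For the flags through `u` the sum over the `j`-th space is that over `⟨u⟩`, which is common to
all of them, plus a sum over points of the residue of `u`. -/
lemma IsSymplectic.sum_mem_mul_sq_sum_mem_le (hB : IsSymplectic B) (hj : j ∈ J) (hj2 : 2 ≤ j)
    (hjV : j + 4 ≤ finrank F V) (hjM : Q ^ (j + 1) ≤ √M) (hu : u ≠ 0) (z : V → ℝ) :
    ∑ C : SFlag B J, 𝟙[u ∈ C.space j] * (∑ w, 𝟙[w ∈ C.space j] * z w) ^ 2
      ≤ (2 * isoStarCount B J j 1 + 4 * (isoStarCount B J j 3 / Q)) *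
          (∑ w, 𝟙[w ∈ Submodule.span F {u}] * z w) ^ 2
        + 4 * (isoStarCount B J j 3 / Q) * (∑ w, 𝟙[B u w = 0] * z w) ^ 2
        + 4 * Q ^ 2 * isoStarCount B J j 2 * ∑ w, 𝟙[B u w = 0] * z w ^ 2 := by
  have hN₃ := isoStarCount_three_div_nonneg (B := B) (J := J) hj2 hjV
  have hres := hB.sum_mem_mul_sq_sum_residuePart_le hj hj2 hjV hjM hu z
  rw [hB.alt.sum_residuePart] at hres
  set L := ∑ w, 𝟙[w ∈ Submodule.span F {u}] * z w
  set Y := ∑ w, 𝟙[B u w = 0] * z w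
  have hflag (C : SFlag B J) : 𝟙[u ∈ C.space j] * (∑ w, 𝟙[w ∈ C.space j] * z w) ^ 2
      ≤ 2 * L ^ 2 * 𝟙[u ∈ C.space j]
        + 2 * (𝟙[u ∈ C.space j] * (∑ w, 𝟙[w ∈ C.space j] * residuePart B u z w) ^ 2) := by
    by_cases hC : u ∈ C.space j
    · rw [C.sum_mem_mul_eq_add hj hC z]
      simp only [if_pos hC, one_mul, mul_one]
      linarith [add_sq_le (a := L) (b := ∑ w, 𝟙[w ∈ C.space j] * residuePart B u z w)]
    · simp [hC]
  have hsum := sum_le_sum fun (C : SFlag B J) (_ : C ∈ univ) => hflag C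
  rw [sum_add_distrib, ← mul_sum, ← mul_sum, hB.sum_mem_space hj hu] at hsum
  have hsub : (Y - L) ^ 2 ≤ 2 * (Y ^ 2 + L ^ 2) := by linarith [sq_nonneg (Y + L)]
  linarith [mul_le_mul_of_nonneg_left hsub hN₃]

end ThirdMoment

section Weighted

variable {F V : Type} [Field F] [Fintype F] [AddCommGroup V] [Module F V] [Fintype V]
  {B : V →ₗ[F] V →ₗ[F] F} {J : Finset ℕ} {j : ℕ} {h z : V → ℝ} {δ : ℝ}

local notation "Q" => (Fintype.card F : ℝ)
local notation "M" => (Fintype.card V : ℝ)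

lemma sum_mem_span_singleton_le (u : V) : ∑ w, 𝟙[w ∈ Submodule.span F {u}] ≤ Q := by
  rw [sum_mem_submodule]
  have hrank : finrank F (Submodule.span F {u}) ≤ 1 := by
    simpa using finrank_span_le_card (R := F) ({u} : Set V)
  simpa using pow_le_pow_right₀ (one_lt_fieldCard F).le hrank

lemma sq_sum_mem_span_singleton_le (u : V) (z : V → ℝ) :
    (∑ w, 𝟙[w ∈ Submodule.span F {u}] * z w) ^ 2
      ≤ Q * ∑ w, 𝟙[w ∈ Submodule.span F {u}] * z w ^ 2 := by
  have hsq (w : V) : 𝟙[w ∈ Submodule.span F {u}] ^ 2 = 𝟙[w ∈ Submodule.span F {u}] := by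
    split_ifs <;> norm_num
  calc (∑ w, 𝟙[w ∈ Submodule.span F {u}] * z w) ^ 2
      = (∑ w, 𝟙[w ∈ Submodule.span F {u}] * (𝟙[w ∈ Submodule.span F {u}] * z w)) ^ 2 := by
        simp only [← mul_assoc, ← sq, hsq]
    _ ≤ (∑ w, 𝟙[w ∈ Submodule.span F {u}]) * ∑ w, 𝟙[w ∈ Submodule.span F {u}] * z w ^ 2 := by
        simpa only [mul_pow, hsq] using sum_mul_sq_le_sq_mul_sq univ
          (fun w => 𝟙[w ∈ Submodule.span F {u}]) fun w => 𝟙[w ∈ Submodule.span F {u}] * z w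
    _ ≤ Q * ∑ w, 𝟙[w ∈ Submodule.span F {u}] * z w ^ 2 :=
        mul_le_mul_of_nonneg_right (sum_mem_span_singleton_le u)
          (sum_nonneg fun _ _ => mul_nonneg (iverson_nonneg _) (sq_nonneg _))

lemma sum_mul_sq_sum_mem_span_singleton_le (hh : ∀ u, 0 ≤ h u) (hδ : ∀ u, h u ≤ δ)
    (hz : z 0 = 0) :
    ∑ u, h u * (∑ w, 𝟙[w ∈ Submodule.span F {u}] * z w) ^ 2 ≤ δ * Q ^ 2 * ∑ w, z w ^ 2 := by
  have hQ := fieldCard_pos F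
  have hδ0 : 0 ≤ δ := (hh 0).trans (hδ 0)
  have hterm (u w : V) : h u * (𝟙[w ∈ Submodule.span F {u}] * z w ^ 2)
      ≤ δ * (z w ^ 2 * 𝟙[u ∈ Submodule.span F {w}]) := by
    rcases eq_or_ne w 0 with rfl | hw
    · simp [hz]
    by_cases hwu : w ∈ Submodule.span F {u}
    · obtain ⟨c, rfl⟩ := Submodule.mem_span_singleton.1 hwu
      have hc : c ≠ 0 := fun hc => hw (by rw [hc, zero_smul])
      have hu : u ∈ Submodule.span F {c • u} :=
        Submodule.mem_span_singleton.2 ⟨c⁻¹, inv_smul_smul₀ hc u⟩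
      rw [if_pos hwu, if_pos hu, one_mul, mul_one]
      exact mul_le_mul_of_nonneg_right (hδ u) (sq_nonneg _)
    · rw [if_neg hwu, zero_mul, mul_zero]
      exact mul_nonneg hδ0 (mul_nonneg (sq_nonneg _) (iverson_nonneg _))
  have hline (w : V) : z w ^ 2 * ∑ u, 𝟙[u ∈ Submodule.span F {w}] = Q * z w ^ 2 := by
    rcases eq_or_ne w 0 with rfl | hw
    · simp [hz]
    · rw [sum_mem_submodule, finrank_span_singleton hw, pow_one, mul_comm]
  calc ∑ u, h u * (∑ w, 𝟙[w ∈ Submodule.span F {u}] * z w) ^ 2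
      ≤ ∑ u, h u * (Q * ∑ w, 𝟙[w ∈ Submodule.span F {u}] * z w ^ 2) :=
        sum_le_sum fun u _ => mul_le_mul_of_nonneg_left (sq_sum_mem_span_singleton_le u z) (hh u)
    _ = Q * ∑ u, ∑ w, h u * (𝟙[w ∈ Submodule.span F {u}] * z w ^ 2) := by
        simp only [mul_sum, mul_left_comm]
    _ ≤ Q * ∑ u, ∑ w, δ * (z w ^ 2 * 𝟙[u ∈ Submodule.span F {w}]) :=
        mul_le_mul_of_nonneg_left (sum_le_sum fun u _ => sum_le_sum fun w _ => hterm u w) hQ.le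
    _ = δ * Q ^ 2 * ∑ w, z w ^ 2 := by
        rw [sum_comm]
        simp only [← mul_sum, hline]
        ring

lemma IsSymplectic.sum_mul_sq_sum_perp_le (hB : IsSymplectic B) (hh : ∀ u, 0 ≤ h u)
    (hδ : ∀ u, h u ≤ δ) (hz : z 0 = 0) (hsum : ∑ w, z w = 0) :
    ∑ u, h u * (∑ w, 𝟙[B u w = 0] * z w) ^ 2 ≤ δ * (M * ∑ w, z w ^ 2) := by
  have hkernel (u : V) : ∑ w, 𝟙[B u w = 0] * z w = ∑ w, z w * perpKernel B w u := by
    simp only [perpKernel, mul_sub, sum_sub_distrib, ← sum_mul, hsum, zero_mul, sub_zero,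
      hB.alt.apply_eq_zero_comm (u := u), mul_comm]
  have hδ0 : 0 ≤ δ := (hh 0).trans (hδ 0)
  refine le_trans ?_ (mul_le_mul_of_nonneg_left (hB.sum_sq_sum_mul_perpKernel_le hz) hδ0)
  rw [mul_sum]
  refine sum_le_sum fun u _ => ?_
  rw [hkernel]
  exact mul_le_mul_of_nonneg_right (hδ u) (sq_nonneg _)

lemma IsSymplectic.sum_mul_sum_perp_mul_sq_le (hB : IsSymplectic B) (hδ0 : 0 ≤ δ) (hh : h 0 = 0)
    (hzδ : ∀ w, |z w| ≤ δ) (hzh : ∑ w, z w ^ 2 ≤ ∑ w, h w ^ 2) :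
    ∑ u, h u * ∑ w, 𝟙[B u w = 0] * z w ^ 2
      ≤ (∑ u, h u) * (∑ w, z w ^ 2) / Q + √M * δ * ∑ w, h w ^ 2 := by
  have hfour : ∑ w, (z w ^ 2) ^ 2 ≤ δ ^ 2 * ∑ w, h w ^ 2 :=
    calc ∑ w, (z w ^ 2) ^ 2 ≤ ∑ w, δ ^ 2 * z w ^ 2 := sum_le_sum fun w _ => by
          rw [sq (z w ^ 2)]
          exact mul_le_mul_of_nonneg_right (sq_le_sq' (abs_le.1 (hzδ w)).1 (abs_le.1 (hzδ w)).2)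
            (sq_nonneg _)
      _ ≤ δ ^ 2 * ∑ w, h w ^ 2 := by
          rw [← mul_sum]
          exact mul_le_mul_of_nonneg_left hzh (sq_nonneg δ)
  have hsqrt : √(M * (∑ w, h w ^ 2) * ∑ w, (z w ^ 2) ^ 2) ≤ √M * δ * ∑ w, h w ^ 2 := by
    have hH : 0 ≤ ∑ w, h w ^ 2 := sum_nonneg fun _ _ => sq_nonneg _
    refine Real.sqrt_le_iff.2 ⟨by positivity, ?_⟩
    rw [mul_pow, mul_pow, Real.sq_sqrt (Nat.cast_nonneg _)]
    linarith [mul_le_mul_of_nonneg_left hfour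
      (mul_nonneg (Nat.cast_nonneg (α := ℝ) (Fintype.card V)) hH)]
  have hperp := hB.sum_sum_mul_perp_le hh fun w => z w ^ 2
  have hexpand : ∑ u, h u * ∑ w, 𝟙[B u w = 0] * z w ^ 2
      = ∑ u, ∑ w, h u * z w ^ 2 * 𝟙[B u w = 0] :=
    sum_congr rfl fun u _ => by
      rw [mul_sum]
      exact sum_congr rfl fun w _ => by ring
  linarith

lemma isoStarCount_two_mul_sqrt_le (hj2 : 2 ≤ j) (hjV : j + 4 ≤ finrank F V)
    (hjM : Q ^ (j + 1) ≤ √M) : isoStarCount B J j 2 * √M ≤ isoStarCount B J j 1 := by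
  simpa only [pow_zero, one_mul] using
    isoStarCount_succ_succ_mul_sqrt_le (B := B) (J := J) (k := 0) (by lia) (by lia) hjM

lemma isoStarCount_three_div_mul_le (hj2 : 2 ≤ j) (hjV : j + 4 ≤ finrank F V)
    (hjM : Q ^ (j + 1) ≤ √M) : isoStarCount B J j 3 / Q * M ≤ isoStarCount B J j 1 := by
  have hQ := fieldCard_pos F
  have h₃ : isoStarCount B J j 3 * √M ≤ Q ^ 1 * isoStarCount B J j 2 :=
    isoStarCount_succ_succ_mul_sqrt_le hj2 (by lia) hjM
  have h₂ := isoStarCount_two_mul_sqrt_le (B := B) (J := J) hj2 hjV hjM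
  rw [div_mul_eq_mul_div, div_le_iff₀ hQ, ← Real.mul_self_sqrt (Nat.cast_nonneg (Fintype.card V))]
  linarith [mul_le_mul_of_nonneg_right h₃ (Real.sqrt_nonneg M), mul_le_mul_of_nonneg_left h₂ hQ.le]

lemma isoStarCount_three_div_le (hj2 : 2 ≤ j) (hjV : j + 4 ≤ finrank F V)
    (hjM : Q ^ (j + 1) ≤ √M) : isoStarCount B J j 3 / Q ≤ isoStarCount B J j 1 := by
  have hM1 : (1 : ℝ) ≤ M := by exact_mod_cast Fintype.card_pos (α := V)
  exact (le_mul_of_one_le_right (isoStarCount_three_div_nonneg hj2 hjV) hM1).trans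
    (isoStarCount_three_div_mul_le hj2 hjV hjM)

lemma IsSymplectic.sum_sum_mem_mul_sq_sum_mem_le (hB : IsSymplectic B) (hj : j ∈ J) (hj2 : 2 ≤ j)
    (hjV : j + 4 ≤ finrank F V) (hjM : Q ^ (j + 1) ≤ √M) (hh : ∀ u, 0 ≤ h u) (hh0 : h 0 = 0)
    (z : V → ℝ) :
    ∑ C : SFlag B J, (∑ u, 𝟙[u ∈ C.space j] * h u) * (∑ w, 𝟙[w ∈ C.space j] * z w) ^ 2
      ≤ (2 * isoStarCount B J j 1 + 4 * (isoStarCount B J j 3 / Q)) *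
          ∑ u, h u * (∑ w, 𝟙[w ∈ Submodule.span F {u}] * z w) ^ 2
        + 4 * (isoStarCount B J j 3 / Q) * ∑ u, h u * (∑ w, 𝟙[B u w = 0] * z w) ^ 2
        + 4 * Q ^ 2 * isoStarCount B J j 2 * ∑ u, h u * ∑ w, 𝟙[B u w = 0] * z w ^ 2 := by
  have hswap : ∑ C : SFlag B J, (∑ u, 𝟙[u ∈ C.space j] * h u) *
        (∑ w, 𝟙[w ∈ C.space j] * z w) ^ 2
      = ∑ u, h u * ∑ C : SFlag B J, 𝟙[u ∈ C.space j] * (∑ w, 𝟙[w ∈ C.space j] * z w) ^ 2 := by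
    simp only [sum_mul]
    rw [sum_comm]
    refine sum_congr rfl fun u _ => ?_
    rw [mul_sum]
    exact sum_congr rfl fun C _ => by ring
  rw [hswap, mul_sum, mul_sum, mul_sum, ← sum_add_distrib, ← sum_add_distrib]
  refine sum_le_sum fun u _ => ?_
  rcases eq_or_ne u 0 with rfl | hu
  · simp [hh0]
  · linarith [mul_le_mul_of_nonneg_left (hB.sum_mem_mul_sq_sum_mem_le hj hj2 hjV hjM hu z) (hh u)]

lemma IsSymplectic.sum_sum_mem_mul_sq_sum_mem_le_of_le (hB : IsSymplectic B) (hj : j ∈ J)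
    (hj2 : 2 ≤ j) (hjV : j + 4 ≤ finrank F V) (hjM : Q ^ (j + 1) ≤ √M)
    (hh : ∀ u, 0 ≤ h u) (hδ : ∀ u, h u ≤ δ) (hh0 : h 0 = 0) (hhM : ∑ u, h u ≤ 4 * √M)
    (hz0 : z 0 = 0) (hzδ : ∀ w, |z w| ≤ δ) (hsum : ∑ w, z w = 0)
    (hzh : ∑ w, z w ^ 2 ≤ ∑ w, h w ^ 2) :
    ∑ C : SFlag B J, (∑ u, 𝟙[u ∈ C.space j] * h u) * (∑ w, 𝟙[w ∈ C.space j] * z w) ^ 2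
      ≤ isoStarCount B J j 1 * (14 * δ * Q ^ 2 + 16 * Q) * ∑ w, h w ^ 2 := by
  have hQ := one_lt_fieldCard F
  have hδ0 : 0 ≤ δ := (hh 0).trans (hδ 0)
  have hN₂ : 0 ≤ isoStarCount B J j 2 := isoStarCount_nonneg (by lia) (by lia)
  have hc := isoStarCount_three_div_nonneg (B := B) (J := J) hj2 hjV
  have h₂ := isoStarCount_two_mul_sqrt_le (B := B) (J := J) hj2 hjV hjM
  have h₃ := isoStarCount_three_div_le (B := B) (J := J) hj2 hjV hjM
  have h₃M := isoStarCount_three_div_mul_le (B := B) (J := J) hj2 hjV hjM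
  have hline := sum_mul_sq_sum_mem_span_singleton_le (F := F) hh hδ hz0
  have hperp := hB.sum_mul_sq_sum_perp_le hh hδ hz0 hsum
  have hperp' := hB.sum_mul_sum_perp_mul_sq_le hδ0 hh0 hzδ hzh
  refine (hB.sum_sum_mem_mul_sq_sum_mem_le hj hj2 hjV hjM hh hh0 z).trans ?_
  set N₁ := isoStarCount B J j 1
  set N₂ := isoStarCount B J j 2
  set c := isoStarCount B J j 3 / Q
  set H₂ := ∑ w, h w ^ 2
  have hN₁ : 0 ≤ N₁ := hc.trans h₃
  have hH₂ : 0 ≤ H₂ := sum_nonneg fun _ _ => sq_nonneg _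
  calc _ ≤ (2 * N₁ + 4 * N₁) * (δ * Q ^ 2 * H₂) + 4 * c * (δ * (M * H₂))
        + 4 * Q ^ 2 * N₂ * (4 * √M * H₂ / Q + √M * δ * H₂) := by
        gcongr
        · exact sum_nonneg fun u _ => mul_nonneg (hh u) (sq_nonneg _)
        · exact hline.trans (by gcongr)
        · exact hperp.trans (by gcongr)
        · exact hperp'.trans (by gcongr)
    _ = 6 * N₁ * (δ * Q ^ 2 * H₂) + 4 * (c * M) * (δ * H₂)
        + (N₂ * √M) * (16 * Q + 4 * δ * Q ^ 2) * H₂ := by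
        field_simp
        ring
    _ ≤ 6 * N₁ * (δ * Q ^ 2 * H₂) + 4 * N₁ * (δ * (Q ^ 2 * H₂))
        + N₁ * (16 * Q + 4 * δ * Q ^ 2) * H₂ := by
        gcongr
        exact le_mul_of_one_le_left hH₂ (one_le_pow₀ hQ.le)
    _ = N₁ * (14 * δ * Q ^ 2 + 16 * Q) * H₂ := by ring

end Weighted

/-! ### Centering a weight -/

section Centered

variable {V : Type} [AddCommGroup V] [Fintype V] {h : V → ℝ} {δ : ℝ}

local notation "M" => (Fintype.card V : ℝ)

/-- The weight `h` minus its average over the nonzero vectors, set to `0` at the vector `0`. -/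
noncomputable def centered (h : V → ℝ) (v : V) : ℝ :=
  if v = 0 then 0 else h v - (∑ u, h u) / (M - 1)

lemma centered_zero (h : V → ℝ) : centered h 0 = 0 := if_pos rfl

lemma centered_eq_sub (hh0 : h 0 = 0) (v : V) :
    centered h v = h v - (∑ u, h u) / (M - 1) * (1 - 𝟙[v = 0]) := by
  rw [centered]
  split_ifs with hv
  · simp [hv, hh0]
  · ring

lemma sum_one_sub_eq_zero : ∑ v : V, (1 - 𝟙[v = 0]) = M - 1 := by
  simp [sum_sub_distrib]

lemma sum_centered [Nontrivial V] (hh0 : h 0 = 0) : ∑ v, centered h v = 0 := by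
  have hM : (1 : ℝ) < M := by exact_mod_cast Fintype.one_lt_card (α := V)
  rw [sum_congr rfl fun v _ => centered_eq_sub hh0 v, sum_sub_distrib, ← mul_sum,
    sum_one_sub_eq_zero, div_mul_cancel₀ _ (sub_pos.2 hM).ne', sub_self]

lemma sum_sq_centered_le [Nontrivial V] (hh0 : h 0 = 0) :
    ∑ v, centered h v ^ 2 ≤ ∑ v, h v ^ 2 := by
  have hterm (v : V) : centered h v ^ 2
      = h v ^ 2 - (∑ u, h u) / (M - 1) * (h v + centered h v) := by
    rw [centered_eq_sub hh0]
    split_ifs with hv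
    · rw [hv, hh0]
      ring
    · ring
  have hM : (1 : ℝ) ≤ M := by exact_mod_cast Fintype.card_pos (α := V)
  rw [sum_congr rfl fun v _ => hterm v, sum_sub_distrib, ← mul_sum, sum_add_distrib,
    sum_centered hh0, add_zero, div_mul_eq_mul_div]
  exact sub_le_self _ (div_nonneg (mul_self_nonneg _) (sub_nonneg.2 hM))

lemma abs_centered_le (hh : ∀ u, 0 ≤ h u) (hδ : ∀ u, h u ≤ δ) (hh0 : h 0 = 0) (v : V) :
    |centered h v| ≤ δ := by
  have hδ0 : 0 ≤ δ := (hh 0).trans (hδ 0)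
  have hM : (1 : ℝ) ≤ M := by exact_mod_cast Fintype.card_pos (α := V)
  have hmean : (∑ u, h u) / (M - 1) ≤ δ := by
    refine div_le_of_le_mul₀ (sub_nonneg.2 hM) hδ0 ?_
    rw [← sum_one_sub_eq_zero, mul_sum]
    refine sum_le_sum fun u _ => ?_
    split_ifs with hu
    · simp [hu, hh0]
    · simpa using hδ u
  have hmean0 : 0 ≤ (∑ u, h u) / (M - 1) :=
    div_nonneg (sum_nonneg fun u _ => hh u) (sub_nonneg.2 hM)
  rw [centered]
  split_ifs
  · simpa using hδ0
  · exact abs_le.2 ⟨by linarith [hh v], by linarith [hδ v]⟩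

lemma sum_mem_mul_centered {F : Type} [Field F] [Fintype F] [Module F V] (hh0 : h 0 = 0)
    (T : Submodule F V) :
    ∑ v, 𝟙[v ∈ T] * centered h v
      = (∑ v, 𝟙[v ∈ T] * h v)
        - ((Fintype.card F : ℝ) ^ finrank F T - 1) * ((∑ u, h u) / (M - 1)) := by
  have hterm (v : V) : 𝟙[v ∈ T] * centered h v
      = 𝟙[v ∈ T] * h v - (𝟙[v ∈ T] - 𝟙[v = 0]) * ((∑ u, h u) / (M - 1)) := by
    rw [centered_eq_sub hh0]
    by_cases hv : v = 0
    · simp [hv]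
    · rw [if_neg hv]
      ring
  rw [sum_congr rfl fun v _ => hterm v, sum_sub_distrib, ← sum_mul, sum_sub_distrib,
    sum_mem_submodule, sum_ite_eq', if_pos (mem_univ _)]

end Centered

/-! ### Light and heavy vectors -/

section Light

variable {F V : Type} [Field F] [Fintype F] [AddCommGroup V] [Module F V] [Fintype V]
  {B : V →ₗ[F] V →ₗ[F] F} {J : Finset ℕ} {𝓕 : Finset (SFlag B J)} {j n : ℕ} {δ s : ℝ}

local notation "Q" => (Fintype.card F : ℝ)
local notation "M" => (Fintype.card V : ℝ)

/-- The fraction of the flags whose `j`-th space contains `v` that lie in `𝓕`, replaced by `0` where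
it exceeds `δ`. -/
noncomputable def lightWeight (𝓕 : Finset (SFlag B J)) (j : ℕ) (δ : ℝ) (v : V) : ℝ :=
  if flagDegree 𝓕 j v ≤ δ * isoStarCount B J j 1 then flagDegree 𝓕 j v / isoStarCount B J j 1 else 0

lemma lightWeight_zero : lightWeight 𝓕 j δ 0 = 0 := by
  simp [lightWeight, flagDegree_zero]

lemma lightWeight_nonneg (hN : 0 ≤ isoStarCount B J j 1) (v : V) : 0 ≤ lightWeight 𝓕 j δ v := by
  rw [lightWeight]
  split_ifs
  exacts [div_nonneg (flagDegree_nonneg v) hN, le_rfl]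

lemma lightWeight_le (hN : 0 < isoStarCount B J j 1) (hδ : 0 ≤ δ) (v : V) :
    lightWeight 𝓕 j δ v ≤ δ := by
  rw [lightWeight]
  split_ifs with h
  exacts [(div_le_iff₀ hN).2 h, hδ]

lemma isoStarCount_mul_lightWeight_le (hN : 0 < isoStarCount B J j 1) (v : V) :
    isoStarCount B J j 1 * lightWeight 𝓕 j δ v ≤ flagDegree 𝓕 j v := by
  rw [lightWeight]
  split_ifs
  · exact (mul_div_cancel₀ _ hN.ne').le
  · simpa using flagDegree_nonneg v

lemma lightWeight_mul_flagDegree (hN : 0 < isoStarCount B J j 1) (v : V) :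
    lightWeight 𝓕 j δ v * flagDegree 𝓕 j v = isoStarCount B J j 1 * lightWeight 𝓕 j δ v ^ 2 := by
  rw [lightWeight]
  split_ifs
  · field_simp
  · ring

lemma isoStarCount_mul_sum_sq_lightWeight (hN : 0 < isoStarCount B J j 1) :
    isoStarCount B J j 1 * ∑ v, lightWeight 𝓕 j δ v ^ 2
      = ∑ C ∈ 𝓕, ∑ v, 𝟙[v ∈ C.space j] * lightWeight 𝓕 j δ v := by
  simp only [mul_sum, ← lightWeight_mul_flagDegree hN, sum_mul_flagDegree, lightWeight_zero,
    sub_zero]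

lemma IsSymplectic.flagDegree_le (hB : IsSymplectic B) (hj : j ∈ J) {v : V} (hv : v ≠ 0) :
    flagDegree 𝓕 j v ≤ isoStarCount B J j 1 := by
  rw [flagDegree, if_neg hv, ← hB.sum_mem_space hj hv]
  exact sum_le_univ_sum_of_nonneg fun _ => iverson_nonneg _

lemma IsEKRFlags.mem_span_of_lt_flagDegree (h𝓕 : IsEKRFlags (𝓕 : Set (SFlag B J)))
    (hB : IsSymplectic B) (hJn : #J ≤ n) (hJ : ∀ i ∈ J, 2 ≤ i ∧ i + 2 ≤ finrank F V) (hj : j ∈ J)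
    (hδ0 : 0 ≤ δ) (hδ : 4 * n ≤ (Q - 1) * δ ^ 2) (hN : 0 ≤ isoStarCount B J j 1) {u u' : V}
    (hu : δ * isoStarCount B J j 1 < flagDegree 𝓕 j u)
    (hu' : δ * isoStarCount B J j 1 < flagDegree 𝓕 j u') : u ∈ Submodule.span F {u'} := by
  by_contra hind
  have hle := h𝓕.flagDegree_mul_flagDegree_le hB hJn hJ hj hind
  have hlt := mul_lt_mul_of_pos_left (mul_lt_mul'' hu' hu (by positivity) (by positivity))
    (sub_pos.2 (one_lt_fieldCard F))
  linarith [mul_le_mul_of_nonneg_right hδ (sq_nonneg (isoStarCount B J j 1))]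

lemma IsEKRFlags.sum_sq_flagDegree_le (h𝓕 : IsEKRFlags (𝓕 : Set (SFlag B J)))
    (hB : IsSymplectic B) (hJn : #J ≤ n) (hJ : ∀ i ∈ J, 2 ≤ i ∧ i + 2 ≤ finrank F V) (hj : j ∈ J)
    (hδ0 : 0 ≤ δ) (hδ : 4 * n ≤ (Q - 1) * δ ^ 2) (hN : 0 < isoStarCount B J j 1) :
    ∑ v, flagDegree 𝓕 j v ^ 2
      ≤ isoStarCount B J j 1 ^ 2 * (∑ v, lightWeight 𝓕 j δ v ^ 2 + Q) := by
  obtain ⟨u₀, hu₀⟩ : ∃ u₀, ∀ v, δ * isoStarCount B J j 1 < flagDegree 𝓕 j v →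
      v ∈ Submodule.span F {u₀} := by
    by_cases hex : ∃ u₀, δ * isoStarCount B J j 1 < flagDegree 𝓕 j u₀
    · obtain ⟨u₀, hu₀⟩ := hex
      exact ⟨u₀, fun v hv => h𝓕.mem_span_of_lt_flagDegree hB hJn hJ hj hδ0 hδ hN.le hv hu₀⟩
    · exact ⟨0, fun v hv => absurd ⟨v, hv⟩ hex⟩
  have hterm (v : V) : flagDegree 𝓕 j v ^ 2 ≤ isoStarCount B J j 1 ^ 2 *
      (lightWeight 𝓕 j δ v ^ 2 + 𝟙[v ∈ Submodule.span F {u₀}]) := by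
    rw [lightWeight]
    split_ifs with hlight hv hv
    · rw [← sub_nonneg]
      field_simp
      nlinarith [sq_nonneg (isoStarCount B J j 1)]
    · field_simp
      linarith
    · have hv0 : v ≠ 0 := by
        rintro rfl
        exact hlight (by rw [flagDegree_zero]; positivity)
      linarith [pow_le_pow_left₀ (flagDegree_nonneg v) (hB.flagDegree_le (𝓕 := 𝓕) hj hv0) 2]
    · exact absurd (hu₀ v (not_le.1 hlight)) hv
  calc ∑ v, flagDegree 𝓕 j v ^ 2
      ≤ ∑ v, isoStarCount B J j 1 ^ 2 *
          (lightWeight 𝓕 j δ v ^ 2 + 𝟙[v ∈ Submodule.span F {u₀}]) :=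
        sum_le_sum fun v _ => hterm v
    _ ≤ isoStarCount B J j 1 ^ 2 * (∑ v, lightWeight 𝓕 j δ v ^ 2 + Q) := by
        rw [← mul_sum, sum_add_distrib]
        gcongr
        exact sum_mem_span_singleton_le u₀

lemma le_two_mul_add_mul_sq_div {g x : ℝ} (hs : 0 < s) (hg : 0 ≤ g) (hgx : g - x ≤ s) :
    g ≤ 2 * s + g * x ^ 2 / s ^ 2 := by
  have hsq : 0 ≤ g * x ^ 2 / s ^ 2 := by positivity
  rcases le_or_gt g (2 * s) with h | h
  · linarith
  · have hx : g ≤ g * x ^ 2 / s ^ 2 := by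
      rw [le_div_iff₀ (by positivity)]
      exact mul_le_mul_of_nonneg_left (pow_le_pow_left₀ hs.le (by linarith) 2) hg
    linarith

variable {h : V → ℝ}

omit [Module F V] in
lemma pow_sub_one_mul_mean_le (hjM : Q ^ (j + 1) ≤ √M) (hhM : ∑ u, h u ≤ 4 * √M)
    (hs : 4 ≤ Q * s) : (Q ^ j - 1) * ((∑ u, h u) / (M - 1)) ≤ s := by
  have hQ := one_lt_fieldCard F
  have hs0 : 0 < s := pos_of_mul_pos_right (by linarith) (zero_le_one.trans hQ.le)
  have hK : 0 ≤ Q ^ j - 1 := sub_nonneg.2 (one_le_pow₀ hQ.le)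
  have hP : 1 < √M := (one_lt_pow₀ hQ j.succ_ne_zero).trans_le hjM
  have hM : M = √M * √M := (Real.mul_self_sqrt (Nat.cast_nonneg _)).symm
  have hQP : 1 ≤ Q * √M := one_le_mul_of_one_le_of_one_le hQ.le hP.le
  rw [← mul_div_assoc, div_le_iff₀ (by nlinarith)]
  calc (Q ^ j - 1) * ∑ u, h u ≤ (Q ^ j - 1) * (4 * √M) := mul_le_mul_of_nonneg_left hhM hK
    _ ≤ Q * s * ((Q ^ j - 1) * √M) := by
        linarith [mul_le_mul_of_nonneg_right hs (mul_nonneg hK (Real.sqrt_nonneg M))]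
    _ = s * (Q ^ (j + 1) * √M - Q * √M) := by ring
    _ ≤ s * (M - 1) := by
        rw [hM, Real.sqrt_mul_self (Real.sqrt_nonneg M)]
        gcongr

lemma IsSymplectic.sum_sum_mem_mul_le (hB : IsSymplectic B) (hj : j ∈ J)
    (hj2 : 2 ≤ j) (hjV : j + 4 ≤ finrank F V) (hjM : Q ^ (j + 1) ≤ √M)
    (hh : ∀ u, 0 ≤ h u) (hδ : ∀ u, h u ≤ δ) (hh0 : h 0 = 0) (hhM : ∑ u, h u ≤ 4 * √M)
    (hs : 4 ≤ Q * s) :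
    ∑ C ∈ 𝓕, ∑ u, 𝟙[u ∈ C.space j] * h u
      ≤ 2 * s * #𝓕 + isoStarCount B J j 1 * (14 * δ * Q ^ 2 + 16 * Q) / s ^ 2 * ∑ u, h u ^ 2 := by
  have : Nontrivial V := nontrivial_of_finrank_pos (R := F) (by lia)
  have hs0 : 0 < s := pos_of_mul_pos_right (by linarith) (fieldCard_pos F).le
  have hthird := hB.sum_sum_mem_mul_sq_sum_mem_le_of_le hj hj2 hjV hjM hh hδ hh0 hhM
    (centered_zero h) (abs_centered_le hh hδ hh0) (sum_centered hh0) (sum_sq_centered_le hh0)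
  have hnonneg (C : SFlag B J) : 0 ≤ ∑ u, 𝟙[u ∈ C.space j] * h u :=
    sum_nonneg fun u _ => mul_nonneg (iverson_nonneg _) (hh u)
  have hterm (C : SFlag B J) : ∑ u, 𝟙[u ∈ C.space j] * h u ≤ 2 * s
      + (∑ u, 𝟙[u ∈ C.space j] * h u) * (∑ w, 𝟙[w ∈ C.space j] * centered h w) ^ 2 / s ^ 2 := by
    refine le_two_mul_add_mul_sq_div hs0 (hnonneg C) ?_
    rw [sum_mem_mul_centered hh0, C.finrank_eq j hj, sub_sub_cancel]
    exact pow_sub_one_mul_mean_le hjM hhM hs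
  calc ∑ C ∈ 𝓕, ∑ u, 𝟙[u ∈ C.space j] * h u
      ≤ 2 * s * #𝓕 + (∑ C ∈ 𝓕, (∑ u, 𝟙[u ∈ C.space j] * h u) *
          (∑ w, 𝟙[w ∈ C.space j] * centered h w) ^ 2) / s ^ 2 := by
        refine (sum_le_sum fun C _ => hterm C).trans_eq ?_
        rw [sum_add_distrib, sum_const, nsmul_eq_mul, sum_div, mul_comm]
    _ ≤ 2 * s * #𝓕 + (isoStarCount B J j 1 * (14 * δ * Q ^ 2 + 16 * Q) * ∑ u, h u ^ 2) / s ^ 2 := by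
        gcongr
        exact (sum_le_univ_sum_of_nonneg fun C => mul_nonneg (hnonneg C) (sq_nonneg _)).trans hthird
    _ = _ := by ring

end Light

/-! ### The ratio bound is not attained -/

section RatioBound

variable {F V : Type} [Field F] [Fintype F] [AddCommGroup V] [Module F V] [Fintype V]
  {B : V →ₗ[F] V →ₗ[F] F} {J : Finset ℕ} {𝓕 : Finset (SFlag B J)} {j n : ℕ}

local notation "Q" => (Fintype.card F : ℝ)
local notation "M" => (Fintype.card V : ℝ)

lemma exists_subset_card_mul_le_two_mul {α : Type*} {S : Finset α} {a b : ℝ} (hb : 0 < b)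
    (hba : b ≤ a) (ha : a ≤ #S * b) : ∃ T ⊆ S, a ≤ #T * b ∧ #T * b ≤ 2 * a := by
  obtain ⟨T, hTS, hT⟩ := exists_subset_card_eq (Nat.ceil_le.2 ((div_le_iff₀ hb).2 ha))
  refine ⟨T, hTS, ?_, ?_⟩
  · rw [hT, ← div_le_iff₀ hb]
    exact Nat.le_ceil _
  · have hceil := mul_le_mul_of_nonneg_right
      (Nat.ceil_lt_add_one (div_nonneg (hb.le.trans hba) hb.le)).le hb.le
    rw [add_mul, div_mul_cancel₀ _ hb.ne'] at hceil
    rw [hT]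
    linarith

lemma isoStarCount_one_mul (hV : 0 < finrank F V) :
    isoStarCount B J j 1 * (√M - 1) * (√M + 1) = Fintype.card (SFlag B J) * (Q ^ j - 1) := by
  have hsucc : isoStarCount B J j 1 * (M / Q ^ 0 - Q ^ 0)
      = isoStarCount B J j 0 * (Q ^ j - Q ^ 0) := isoStarCount_succ (by lia)
  rw [isoStarCount_zero, pow_zero, div_one] at hsucc
  rw [← hsucc, mul_assoc, mul_comm (√M - 1), ← mul_self_sub_one,
    Real.mul_self_sqrt (Nat.cast_nonneg _)]

lemma IsSymplectic.one_le_isoStarCount_one [Nonempty (SFlag B J)] (hB : IsSymplectic B)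
    (hj : j ∈ J) (hj0 : 0 < j) (hV : 0 < finrank F V) : 1 ≤ isoStarCount B J j 1 := by
  have : Nontrivial V := nontrivial_of_finrank_pos hV
  have hpos : 0 < isoStarCount B J j 1 := by
    have hQ := one_lt_fieldCard F
    have hM : 1 < √M := Real.lt_sqrt_of_sq_lt
      (by rw [one_pow]; exact_mod_cast Fintype.one_lt_card (α := V))
    refine pos_of_mul_pos_left (b := (√M - 1) * (√M + 1)) ?_
      (mul_nonneg (by linarith) (by linarith))
    rw [← mul_assoc, isoStarCount_one_mul hV]
    exact mul_pos (Nat.cast_pos.2 Fintype.card_pos) (sub_pos.2 (one_lt_pow₀ hQ hj0.ne'))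
  obtain ⟨u, hu⟩ := exists_ne (0 : V)
  rw [← hB.sum_mem_space hj hu, sum_boole] at hpos ⊢
  exact_mod_cast hpos

lemma IsSymplectic.sqrt_card_add_one_le [Nonempty (SFlag B J)] (hB : IsSymplectic B)
    (hj : j ∈ J) (hj0 : 0 < j) (hV : 0 < finrank F V) (hjM : Q ^ (j + 1) ≤ √M) :
    √M + 1 ≤ Fintype.card (SFlag B J) := by
  have hQ := one_lt_fieldCard F
  have hK : 1 < Q ^ j := one_lt_pow₀ hQ hj0.ne'
  have hKM : Q ^ j ≤ √M := (pow_le_pow_right₀ hQ.le j.le_succ).trans hjM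
  have hN := hB.one_le_isoStarCount_one hj hj0 hV
  refine le_of_mul_le_mul_right ?_ (sub_pos.2 hK)
  rw [← isoStarCount_one_mul hV, mul_comm]
  gcongr
  nlinarith

lemma isoStarCount_one_mul_sqrt_le (hj0 : 0 < j) (hV : 0 < finrank F V)
    (hjM : Q ^ (j + 1) ≤ √M) (hlow : (Fintype.card (SFlag B J) : ℝ) ≤ #𝓕 * (√M + 1)) :
    isoStarCount B J j 1 * √M ≤ #𝓕 * Q ^ j := by
  have hQ := one_lt_fieldCard F
  have hK : 1 < Q ^ j := one_lt_pow₀ hQ hj0.ne'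
  have hKM : Q ^ j ≤ √M := (pow_le_pow_right₀ hQ.le j.le_succ).trans hjM
  have hN : 0 ≤ isoStarCount B J j 1 := isoStarCount_nonneg (by lia) (by lia)
  have hdeg : isoStarCount B J j 1 * (√M - 1) ≤ #𝓕 * (Q ^ j - 1) := by
    refine le_of_mul_le_mul_right ?_ (by linarith : 0 < √M + 1)
    rw [isoStarCount_one_mul hV]
    linarith [mul_le_mul_of_nonneg_right hlow (sub_pos.2 hK).le]
  refine le_of_mul_le_mul_right ?_ (sub_pos.2 hK)
  have := mul_le_mul_of_nonneg_right hdeg (zero_le_one.trans hK.le)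
  have := mul_le_mul_of_nonneg_left hKM hN
  linarith

lemma sum_lightWeight_le (hj : j ∈ J) (hV : 0 < finrank F V)
    (hN : 0 < isoStarCount B J j 1) (hup : #𝓕 * (√M + 1) ≤ 2 * (Fintype.card (SFlag B J) : ℝ))
    (δ : ℝ) : ∑ v, lightWeight 𝓕 j δ v ≤ 4 * √M := by
  have hQ := one_lt_fieldCard F
  have hdeg : #𝓕 * (Q ^ j - 1) ≤ 2 * (isoStarCount B J j 1 * (√M - 1)) := by
    refine le_of_mul_le_mul_right ?_ (by positivity : 0 < √M + 1)
    rw [mul_assoc 2, isoStarCount_one_mul hV]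
    linarith [mul_le_mul_of_nonneg_right hup (sub_nonneg.2 (one_le_pow₀ hQ.le (n := j)))]
  refine le_of_mul_le_mul_left ?_ hN
  calc isoStarCount B J j 1 * ∑ v, lightWeight 𝓕 j δ v
      ≤ ∑ v, flagDegree 𝓕 j v := by
        rw [mul_sum]
        exact sum_le_sum fun v _ => isoStarCount_mul_lightWeight_le hN v
    _ = #𝓕 * (Q ^ j - 1) := sum_flagDegree hj
    _ ≤ isoStarCount B J j 1 * (4 * √M) := by
        linarith [mul_nonneg hN.le (Real.sqrt_nonneg M)]

/-- The threshold `1 / (2 ^ 15 * n ^ 2)` below which a normalized degree counts as light. It is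
small enough for the third moment estimate, and large enough, once `2 ^ 34 * n ^ 5 ≤ |F|`, that
heavy vectors span at most a line. -/
noncomputable def lightThreshold (n : ℕ) : ℝ := 1 / (2 ^ 15 * n ^ 2)

lemma lightThreshold_nonneg (n : ℕ) : 0 ≤ lightThreshold n := by
  rw [lightThreshold]
  positivity

lemma four_mul_le_sub_one_mul_sq_lightThreshold (hn : 0 < n) {q : ℝ} (hq : 2 ^ 34 * n ^ 5 ≤ q) :
    4 * n ≤ (q - 1) * lightThreshold n ^ 2 := by
  have hn1 : (1 : ℝ) ≤ n := by exact_mod_cast hn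
  rw [lightThreshold, one_div, inv_pow, ← div_eq_mul_inv, le_div_iff₀ (by positivity)]
  linarith [one_le_pow₀ hn1 (n := 5)]

lemma lightThreshold_third_moment (hn : 0 < n) {q : ℝ} (hq : 2 ^ 34 * n ^ 5 ≤ q) :
    (14 * lightThreshold n * q ^ 2 + 16 * q) / (q / (32 * n)) ^ 2 ≤ 1 / 2 := by
  have hn1 : (1 : ℝ) ≤ n := by exact_mod_cast hn
  have hn5 : (n : ℝ) ^ 2 ≤ n ^ 5 := pow_le_pow_right₀ hn1 (by norm_num)
  have hq0 : 0 < q := lt_of_lt_of_le (by positivity) hq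
  have hnq : (2 : ℝ) ^ 34 * n ^ 2 ≤ q := by linarith
  rw [lightThreshold, div_le_iff₀ (by positivity)]
  field_simp
  nlinarith [hnq]

lemma IsSymplectic.mul_sum_sq_lightWeight_le (hB : IsSymplectic B) (hj : j ∈ J) (hj2 : 2 ≤ j)
    (hjV : j + 4 ≤ finrank F V) (hjM : Q ^ (j + 1) ≤ √M) (hn : 0 < n) (hq : 2 ^ 34 * n ^ 5 ≤ Q)
    (hN : 0 < isoStarCount B J j 1) (hup : #𝓕 * (√M + 1) ≤ 2 * (Fintype.card (SFlag B J) : ℝ)) :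
    8 * n * (isoStarCount B J j 1 * ∑ v, lightWeight 𝓕 j (lightThreshold n) v ^ 2) ≤ Q * #𝓕 := by
  have hn1 : (1 : ℝ) ≤ n := by exact_mod_cast hn
  have hs : 4 ≤ Q * (Q / (32 * n)) := by
    have hn5 : (n : ℝ) ^ 1 ≤ n ^ 5 := pow_le_pow_right₀ hn1 (by norm_num)
    rw [← mul_div_assoc, le_div_iff₀ (by positivity)]
    nlinarith
  have hmoment := hB.sum_sum_mem_mul_le (𝓕 := 𝓕) hj hj2 hjV hjM (lightWeight_nonneg (𝓕 := 𝓕) hN.le)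
    (lightWeight_le hN (lightThreshold_nonneg n)) lightWeight_zero
    (sum_lightWeight_le hj (by lia) hN hup _) hs
  rw [← isoStarCount_mul_sum_sq_lightWeight hN, mul_div_assoc] at hmoment
  have hhalf := mul_le_mul_of_nonneg_left (lightThreshold_third_moment hn hq)
    (mul_nonneg hN.le (sum_nonneg (s := univ) fun v _ =>
      sq_nonneg (lightWeight 𝓕 j (lightThreshold n) v)))
  have hmain : isoStarCount B J j 1 * ∑ v, lightWeight 𝓕 j (lightThreshold n) v ^ 2
      ≤ 4 * (Q / (32 * n)) * #𝓕 := by linarith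
  calc _ ≤ 8 * n * (4 * (Q / (32 * n)) * #𝓕) := by gcongr
    _ = Q * #𝓕 := by field_simp; norm_num

lemma IsEKRFlags.card_mul_lt_of_le_two_mul [Nonempty (SFlag B J)]
    (h𝓕 : IsEKRFlags (𝓕 : Set (SFlag B J))) (hB : IsSymplectic B) (hJn : #J ≤ n)
    (hJ : ∀ i ∈ J, 2 ≤ i ∧ i + 4 ≤ finrank F V ∧ Q ^ (i + 1) ≤ √M) (hq : 2 ^ 34 * n ^ 5 ≤ Q)
    (hup : #𝓕 * (√M + 1) ≤ 2 * (Fintype.card (SFlag B J) : ℝ)) :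
    #𝓕 * (√M + 1) < Fintype.card (SFlag B J) := by
  by_contra! hlow
  have hQ := one_lt_fieldCard F
  have hne : 𝓕.Nonempty := by
    rw [← card_pos, ← Nat.cast_pos (α := ℝ)]
    exact pos_of_mul_pos_left ((Nat.cast_pos.2 Fintype.card_pos).trans_le hlow) (by positivity)
  have hn : 0 < n := by
    obtain ⟨C, hC⟩ := hne
    obtain ⟨i, hi, -⟩ := h𝓕.exists_not_spaceOpp hC hC
    exact (card_pos.2 ⟨i, hi⟩).trans_le hJn
  have hnQ : 16 * n ≤ Q := by
    have hn5 : (n : ℝ) ^ 1 ≤ n ^ 5 := pow_le_pow_right₀ (by exact_mod_cast hn) (by norm_num)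
    linarith [(Nat.cast_pos (α := ℝ)).2 hn]
  obtain ⟨j, hj, hlevel⟩ := h𝓕.exists_level hB hne hJn hnQ
  obtain ⟨hj2, hjV, hjM⟩ := hJ j hj
  have hN := zero_lt_one.trans_le (hB.one_le_isoStarCount_one hj (by lia) (by lia))
  have hsq := h𝓕.sum_sq_flagDegree_le hB hJn (fun i hi => ⟨(hJ i hi).1, by have := hJ i hi; lia⟩) hj
    (lightThreshold_nonneg n) (four_mul_le_sub_one_mul_sq_lightThreshold hn hq) hN
  have hlight := hB.mul_sum_sq_lightWeight_le hj hj2 hjV hjM hn hq hN hup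
  have hcard := isoStarCount_one_mul_sqrt_le (by lia) (by lia) hjM hlow
  set N₁ := isoStarCount B J j 1
  set H₂ := ∑ v, lightWeight 𝓕 j (lightThreshold n) v ^ 2
  have hf : 0 < (#𝓕 : ℝ) := by exact_mod_cast hne.card_pos
  have hupper : (#𝓕 : ℝ) ≤ 8 * n * N₁ := by
    suffices Q * Q ^ j * #𝓕 * #𝓕 ≤ Q * Q ^ j * #𝓕 * (#𝓕 / 2 + 4 * n * N₁) by
      linarith [le_of_mul_le_mul_left this (by positivity)]
    calc Q * Q ^ j * #𝓕 * #𝓕 ≤ 4 * n * √M * (N₁ ^ 2 * (H₂ + Q)) := by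
          rw [mul_assoc _ (#𝓕 : ℝ), ← sq]
          exact hlevel.trans (by gcongr)
      _ = (N₁ * √M) * (8 * n * (N₁ * H₂) / 2 + 4 * n * N₁ * Q) := by ring
      _ ≤ (#𝓕 * Q ^ j) * (Q * #𝓕 / 2 + 4 * n * N₁ * Q) := by gcongr
      _ = Q * Q ^ j * #𝓕 * (#𝓕 / 2 + 4 * n * N₁) := by ring
  have hlower : N₁ * Q ≤ #𝓕 := by
    refine le_of_mul_le_mul_right ?_ (pow_pos (zero_lt_one.trans hQ) j)
    calc N₁ * Q * Q ^ j = N₁ * Q ^ (j + 1) := by ring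
      _ ≤ N₁ * √M := by gcongr
      _ ≤ #𝓕 * Q ^ j := hcard
  nlinarith [(Nat.cast_pos (α := ℝ)).2 hn]

theorem IsEKRFlags.card_mul_lt [Nonempty (SFlag B J)]
    (h𝓕 : IsEKRFlags (𝓕 : Set (SFlag B J))) (hB : IsSymplectic B) (hJn : #J ≤ n)
    (hJ : ∀ i ∈ J, 2 ≤ i ∧ i + 4 ≤ finrank F V ∧ Q ^ (i + 1) ≤ √M) (hq : 2 ^ 34 * n ^ 5 ≤ Q) :
    #𝓕 * (√M + 1) < Fintype.card (SFlag B J) := by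
  rcases 𝓕.eq_empty_or_nonempty with rfl | ⟨C, hC⟩
  · simpa using Fintype.card_pos (α := SFlag B J)
  obtain ⟨j, hj, -⟩ := h𝓕.exists_not_spaceOpp hC hC
  obtain ⟨hj2, hjV, hjM⟩ := hJ j hj
  by_contra! hlow
  obtain ⟨𝓖, h𝓖𝓕, hlow𝓖, hup𝓖⟩ := exists_subset_card_mul_le_two_mul (by positivity)
    (hB.sqrt_card_add_one_le hj (by lia) (by lia) hjM) hlow
  have h𝓖 : IsEKRFlags (𝓖 : Set (SFlag B J)) := fun C hC C' hC' =>
    h𝓕 C (h𝓖𝓕 hC) C' (h𝓖𝓕 hC')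
  exact hlow𝓖.not_gt (h𝓖.card_mul_lt_of_le_two_mul hB hJn hJ hq hup𝓖)

end RatioBound

/-- For large `q`, if `J ⊆ [n]` is nonempty with `1 ∉ J` and `n ∉ J`,
then every EKR-set of flags of type `J` has size strictly below the ratio bound
`N_J/(q^n+1)`. -/
theorem stmt_2 (n : ℕ) (hn : 3 ≤ n) :
    ∃ q₀ : ℕ, ∀ (F V : Type) [Field F] [Fintype F] [AddCommGroup V] [Module F V],
      ∀ q : ℕ, Fintype.card F = q → q₀ ≤ q →
      ∀ B : V →ₗ[F] V →ₗ[F] F, IsAltForm B → NondegForm B →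
      FiniteDimensional F V → Module.finrank F V = 2 * n →
      ∀ J : Finset ℕ, J ⊆ Finset.Icc 1 n → J.Nonempty → 1 ∉ J → n ∉ J →
      ∀ 𝓕 : Set (SFlag B J),
        IsEKRFlags 𝓕 →
        (𝓕.ncard : ℝ) < (Nat.card (SFlag B J) : ℝ) / ((q : ℝ) ^ n + 1) := by
  refine ⟨2 ^ 34 * n ^ 5, ?_⟩
  rintro F V _ _ _ _ q rfl hq B halt hnondeg _ hV J hJ - h1J hnJ 𝓕 h𝓕
  have hB : IsSymplectic B := ⟨halt, hnondeg⟩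
  have : Finite V := Module.finite_of_finite F
  have := Fintype.ofFinite V
  have hJrange : ∀ i ∈ J, 2 ≤ i ∧ i + 1 ≤ n := fun i hi => by
    have hi1 : i ≠ 1 := ne_of_mem_of_not_mem hi h1J
    have hin : i ≠ n := ne_of_mem_of_not_mem hi hnJ
    have := Finset.mem_Icc.1 (hJ hi)
    lia
  have : Nonempty (SFlag B J) := hB.nonempty_sFlag fun i hi => by have := hJrange i hi; lia
  have hsqrt : √(Fintype.card V : ℝ) = (Fintype.card F : ℝ) ^ n := by
    rw [card_eq_fieldCard_pow_finrank F V, hV, pow_mul', Real.sqrt_sq (by positivity)]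
  have hlt := IsEKRFlags.card_mul_lt (𝓕 := 𝓕.toFinset) (n := n) (by rwa [Set.coe_toFinset]) hB
    (by simpa using Finset.card_le_card hJ)
    (fun i hi => ⟨(hJrange i hi).1, by have := hJrange i hi; lia, hsqrt ▸
      pow_le_pow_right₀ (one_lt_fieldCard F).le (hJrange i hi).2⟩) (by exact_mod_cast hq)
  rwa [hsqrt, ← lt_div_iff₀ (by positivity), ← Set.ncard_eq_toFinset_card',
    ← Nat.card_eq_fintype_card] at hlt
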